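/- arXiv:gr-qc/9812061 — 5 statements merged into one kernel-verified Lean document; each statement's English description precedes it below -/
import Mathlib

section
/- Let Φ : ℝ² → [0,∞) be measurable. Suppose U ∈ C¹((0,∞)) satisfies U'(r) = (4π/r²) ∫₀^r s² ρ(s) ds for all r > 0, where ρ(r) = (2π/r²) ∫_{U(r)}^∞ ∫₀^{2r²(E−U(r))} Φ(E,L) (2(E − U(r) − L/(2r²)))^{−1/2} dL dE. If the total mass M = 4π ∫₀^∞ r² ρ(r) dr is finite, then the limit U_∞ = lim_{r→∞} U(r) exists and is finite, and Φ(E,L) = 0 for almost every (E,L) with E > U_∞ and L > 0. -/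
open MeasureTheory Real Set Filter
open scoped ENNReal

/-- The spatial mass density induced by the ansatz `f(x,v) = Φ(E,L)` for the
spherically symmetric Vlasov-Poisson system, expressed as a double integral. -/
noncomputable def rhoVP (Φ : ℝ × ℝ → ℝ) (U : ℝ → ℝ) (r : ℝ) : ℝ≥0∞ :=
  ENNReal.ofReal (2 * π / r ^ 2) *
    ∫⁻ E in Ioi (U r), ∫⁻ L in Ioo (0 : ℝ) (2 * r ^ 2 * (E - U r)),
      ENNReal.ofReal (Φ (E, L) / Real.sqrt (2 * (E - U r - L / (2 * r ^ 2))))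

/-!
Since `U'` is dominated by the total mass over `r ^ 2`, it is integrable near infinity, so `U` has
a finite limit `l`. Finiteness of the mass also forces `liminf r ^ 2 * ρ(r) = 0` as `r → ∞`. As
`r → ∞`, every `(E, L)` with `E > l` and `L > 0` becomes accessible and its radial speed tends to
`√(2 * (E - l))`, so Fatou's lemma gives
`2π ∫∫_{E > l, L > 0} Φ / √(2 * (E - l)) ≤ liminf r ^ 2 * ρ(r) = 0`.
-/

lemma exists_tendsto_atTop_of_norm_hasDerivAt_le {E : Type*} [NormedAddCommGroup E]
    [NormedSpace ℝ E] [CompleteSpace E] {f f' : ℝ → E} {g : ℝ → ℝ} {a : ℝ}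
    (hf : ∀ x ∈ Ioi a, HasDerivAt f (f' x) x) (hg : IntegrableOn g (Ioi a))
    (hle : ∀ x ∈ Ioi a, ‖f' x‖ ≤ g x) : ∃ l, Tendsto f atTop (nhds l) := by
  have hderiv : deriv f =ᵐ[volume.restrict (Ioi a)] f' :=
    ae_restrict_of_forall_mem measurableSet_Ioi fun x hx => (hf x hx).deriv
  have hf' : IntegrableOn f' (Ioi a) :=
    hg.mono' ((aestronglyMeasurable_deriv f _).congr hderiv)
      (ae_restrict_of_forall_mem measurableSet_Ioi hle)
  exact ⟨_, tendsto_limUnder_of_hasDerivAt_of_integrableOn_Ioi hf hf'⟩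

lemma liminf_eq_zero_of_lintegral_ne_top {α : Type*} [MeasurableSpace α] {μ : Measure α}
    {F : Filter α} [F.IsMeasurablyGenerated] {f : α → ℝ≥0∞} (hF : ∀ s ∈ F, μ s = ⊤)
    (hf : ∫⁻ x, f x ∂μ ≠ ⊤) : liminf f F = 0 := by
  by_contra hpos
  obtain ⟨c, hc0, hc⟩ := exists_between (pos_iff_ne_zero.2 hpos)
  obtain ⟨s, hsF, hs, hcs⟩ := (eventually_lt_of_lt_liminf hc).exists_measurable_mem
  refine hf (top_le_iff.1 ?_)
  calc ⊤ = ∫⁻ _ in s, c ∂μ := by rw [setLIntegral_const, hF s hsF, ENNReal.mul_top hc0.ne']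
    _ ≤ ∫⁻ x in s, f x ∂μ := setLIntegral_mono' hs fun x hx => (hcs x hx).le
    _ ≤ ∫⁻ x, f x ∂μ := setLIntegral_le_lintegral s f

lemma liminf_atTop_eq_zero_of_setLIntegral_Ioi_ne_top {f : ℝ → ℝ≥0∞} {a : ℝ}
    (hf : ∫⁻ x in Ioi a, f x ≠ ⊤) : liminf f atTop = 0 := by
  refine liminf_eq_zero_of_lintegral_ne_top (fun s hs => ?_) hf
  obtain ⟨b, hb⟩ := mem_atTop_sets.1 hs
  refine measure_eq_top_mono (s := Ioi (max a b)) (fun x hx => hb x ?_) ?_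
  · exact (le_max_right a b).trans hx.le
  · rw [Measure.restrict_apply measurableSet_Ioi,
      inter_eq_left.2 (Ioi_subset_Ioi (le_max_left a b)), Real.volume_Ioi]

lemma setLIntegral_le_liminf_lintegral_of_tendsto {α ι : Type*} [MeasurableSpace α]
    {μ : Measure α} {F : Filter ι} [F.NeBot] [F.IsCountablyGenerated] {s : Set α}
    {f : ι → α → ℝ≥0∞} {g : α → ℝ≥0∞} (hs : MeasurableSet s) (hf : ∀ i, AEMeasurable (f i) μ)
    (hfg : ∀ x ∈ s, Tendsto (f · x) F (nhds (g x))) :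
    ∫⁻ x in s, g x ∂μ ≤ liminf (fun i => ∫⁻ x, f i x ∂μ) F :=
  calc ∫⁻ x in s, g x ∂μ = ∫⁻ x in s, liminf (f · x) F ∂μ :=
        setLIntegral_congr_fun hs fun x hx => (hfg x hx).liminf_eq.symm
    _ ≤ ∫⁻ x, liminf (f · x) F ∂μ := setLIntegral_le_lintegral s _
    _ ≤ liminf (fun i => ∫⁻ x, f i x ∂μ) F := lintegral_liminf_le' hf

lemma setLIntegral_setLIntegral_eq_setLIntegral_prod {α β : Type*} [MeasurableSpace α]
    [MeasurableSpace β] {μ : Measure α} {ν : Measure β} [SFinite ν] {s : Set α} {t : α → Set β}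
    {f : α × β → ℝ≥0∞} (hs : MeasurableSet s)
    (hst : MeasurableSet {p : α × β | p.1 ∈ s ∧ p.2 ∈ t p.1}) (hf : Measurable f) :
    ∫⁻ a in s, ∫⁻ b in t a, f (a, b) ∂ν ∂μ =
      ∫⁻ p in {p : α × β | p.1 ∈ s ∧ p.2 ∈ t p.1}, f p ∂μ.prod ν := by
  rw [← lintegral_indicator hst, lintegral_prod _ (hf.indicator hst).aemeasurable,
    ← lintegral_indicator hs]
  refine lintegral_congr fun a => ?_
  by_cases ha : a ∈ s
  · have hta : MeasurableSet (t a) := by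
      simpa [ha] using measurable_prodMk_left (x := a) hst
    rw [indicator_of_mem ha, ← lintegral_indicator hta]
    refine lintegral_congr fun b => ?_
    by_cases hb : b ∈ t a <;> simp [ha, hb]
  · simp [ha]

lemma exists_tendsto_of_hasDerivAt_inverse_square {U : ℝ → ℝ} {f : ℝ → ℝ≥0∞} {c : ℝ}
    (hU : ∀ r ∈ Ioi (0 : ℝ),
      HasDerivAt U (c / r ^ 2 * (∫⁻ s in Ioo (0 : ℝ) r, f s).toReal) r)
    (hf : ∫⁻ s in Ioi (0 : ℝ), f s ≠ ⊤) : ∃ l, Tendsto U atTop (nhds l) := by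
  set M := (∫⁻ s in Ioi (0 : ℝ), f s).toReal
  have hint : IntegrableOn (fun r : ℝ => |c| * M * r ^ (-2 : ℝ)) (Ioi 1) :=
    (integrableOn_Ioi_rpow_of_lt (by norm_num) one_pos).const_mul _
  refine exists_tendsto_atTop_of_norm_hasDerivAt_le
    (fun r hr => hU r (Ioi_subset_Ioi zero_le_one hr)) hint fun r hr => ?_
  have henclosed : (∫⁻ s in Ioo (0 : ℝ) r, f s).toReal ≤ M :=
    ENNReal.toReal_mono hf (lintegral_mono_set Ioo_subset_Ioi_self)
  have hr0 : 0 ≤ r := zero_le_one.trans hr.le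
  calc ‖c / r ^ 2 * (∫⁻ s in Ioo (0 : ℝ) r, f s).toReal‖
      = |c| / r ^ 2 * (∫⁻ s in Ioo (0 : ℝ) r, f s).toReal := by
        simp [abs_of_nonneg ENNReal.toReal_nonneg]
    _ ≤ |c| / r ^ 2 * M := by gcongr
    _ = |c| * M * r ^ (-2 : ℝ) := by
        rw [rpow_neg hr0, rpow_two]
        ring

section Density

/-- The pairs `(E, L)` of a particle that can be at radius `r` with nonzero radial and tangential
velocity, `u` being the value of the potential there; this is the domain of integration of
`rhoVP`. -/
def accessibleRegion (u r : ℝ) : Set (ℝ × ℝ) :=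
  {p | p.1 ∈ Ioi u ∧ p.2 ∈ Ioo 0 (2 * r ^ 2 * (p.1 - u))}

/-- The absolute value of the radial velocity at radius `r` of a particle with `(E, L) = p`, `u`
being the value of the potential there. It takes the junk value `0` where the motion is
forbidden. -/
noncomputable def radialSpeed (u r : ℝ) (p : ℝ × ℝ) : ℝ :=
  √(2 * (p.1 - u - p.2 / (2 * r ^ 2)))

@[fun_prop]
lemma measurable_radialSpeed (u r : ℝ) : Measurable (radialSpeed u r) := by
  unfold radialSpeed
  fun_prop

lemma measurableSet_accessibleRegion (u r : ℝ) : MeasurableSet (accessibleRegion u r) :=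
  (measurableSet_lt measurable_const measurable_fst).inter
    ((measurableSet_lt measurable_const measurable_snd).inter
      (measurableSet_lt measurable_snd (by fun_prop)))

lemma ofReal_sq_mul_rhoVP {Φ : ℝ × ℝ → ℝ} (hΦ : Measurable Φ) (U : ℝ → ℝ) {r : ℝ} (hr : r ≠ 0) :
    ENNReal.ofReal (r ^ 2) * rhoVP Φ U r = ENNReal.ofReal (2 * π) *
      ∫⁻ p in accessibleRegion (U r) r, ENNReal.ofReal (Φ p / radialSpeed (U r) r p) := by
  have hconst : ENNReal.ofReal (r ^ 2) * ENNReal.ofReal (2 * π / r ^ 2) =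
      ENNReal.ofReal (2 * π) := by
    rw [← ENNReal.ofReal_mul (sq_nonneg r), mul_div_cancel₀ _ (pow_ne_zero 2 hr)]
  rw [rhoVP, ← mul_assoc, hconst]
  congr 1
  exact setLIntegral_setLIntegral_eq_setLIntegral_prod (s := Ioi (U r))
    (t := fun E => Ioo 0 (2 * r ^ 2 * (E - U r)))
    (f := fun p => ENNReal.ofReal (Φ p / radialSpeed (U r) r p)) measurableSet_Ioi
    (measurableSet_accessibleRegion (U r) r) (by fun_prop)

variable {U : ℝ → ℝ} {l : ℝ}

lemma eventually_mem_accessibleRegion (hU : Tendsto U atTop (nhds l)) {p : ℝ × ℝ}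
    (hp : p ∈ Ioi l ×ˢ Ioi 0) : ∀ᶠ r in atTop, p ∈ accessibleRegion (U r) r := by
  have hangular : Tendsto (fun r => 2 * r ^ 2 * (p.1 - U r)) atTop atTop :=
    ((tendsto_pow_atTop two_ne_zero).const_mul_atTop two_pos).atTop_mul_pos
      (sub_pos.2 hp.1) (tendsto_const_nhds.sub hU)
  filter_upwards [hU.eventually_lt_const hp.1, hangular.eventually_gt_atTop p.2]
    with r hE hL using ⟨hE, hp.2, hL⟩

lemma tendsto_radialSpeed (hU : Tendsto U atTop (nhds l)) (p : ℝ × ℝ) :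
    Tendsto (fun r => radialSpeed (U r) r p) atTop (nhds √(2 * (p.1 - l))) := by
  have hcentrifugal : Tendsto (fun r : ℝ => p.2 / (2 * r ^ 2)) atTop (nhds 0) :=
    tendsto_const_nhds.div_atTop ((tendsto_pow_atTop two_ne_zero).const_mul_atTop two_pos)
  simpa [radialSpeed] using
    (((tendsto_const_nhds.sub hU).sub hcentrifugal).const_mul 2).sqrt

lemma lintegral_div_sqrt_le_liminf_rhoVP {Φ : ℝ × ℝ → ℝ} (hΦ : Measurable Φ)
    (hU : Tendsto U atTop (nhds l)) :
    ENNReal.ofReal (2 * π) *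
        ∫⁻ p in Ioi l ×ˢ Ioi (0 : ℝ), ENNReal.ofReal (Φ p / √(2 * (p.1 - l))) ≤
      liminf (fun r => ENNReal.ofReal (r ^ 2) * rhoVP Φ U r) atTop := by
  let g : ℝ → ℝ × ℝ → ℝ≥0∞ := fun r => (accessibleRegion (U r) r).indicator fun p =>
    ENNReal.ofReal (Φ p / radialSpeed (U r) r p)
  have hg : ∀ r, Measurable (g r) := by
    refine fun r => Measurable.indicator ?_ (measurableSet_accessibleRegion (U r) r)
    fun_prop
  have hlim : ∀ p ∈ Ioi l ×ˢ Ioi (0 : ℝ),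
      Tendsto (g · p) atTop (nhds (ENNReal.ofReal (Φ p / √(2 * (p.1 - l))))) := by
    intro p hp
    have hspeed : √(2 * (p.1 - l)) ≠ 0 :=
      (Real.sqrt_pos.2 (mul_pos two_pos (sub_pos.2 hp.1))).ne'
    refine (ENNReal.tendsto_ofReal
      (tendsto_const_nhds.div (tendsto_radialSpeed hU p) hspeed)).congr' ?_
    filter_upwards [eventually_mem_accessibleRegion hU hp] with r hr
    simp only [g, indicator_of_mem hr, Pi.div_apply]
  have hsq_mul_rho : ∀ᶠ r in atTop, ENNReal.ofReal (r ^ 2) * rhoVP Φ U r =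
      ENNReal.ofReal (2 * π) * ∫⁻ p, g r p := by
    filter_upwards [eventually_ne_atTop (0 : ℝ)] with r hr
    rw [ofReal_sq_mul_rhoVP hΦ U hr, lintegral_indicator (measurableSet_accessibleRegion (U r) r)]
  rw [liminf_congr hsq_mul_rho, ENNReal.liminf_const_mul_of_ne_top ENNReal.ofReal_ne_top]
  gcongr
  exact setLIntegral_le_liminf_lintegral_of_tendsto (measurableSet_Ioi.prod measurableSet_Ioi)
    (fun r => (hg r).aemeasurable) hlim

lemma ae_nonpos_of_liminf_rhoVP_eq_zero {Φ : ℝ × ℝ → ℝ} (hΦ : Measurable Φ)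
    (hU : Tendsto U atTop (nhds l))
    (hρ : liminf (fun r => ENNReal.ofReal (r ^ 2) * rhoVP Φ U r) atTop = 0) :
    ∀ᵐ p : ℝ × ℝ, p ∈ Ioi l ×ˢ Ioi 0 → Φ p ≤ 0 := by
  have hzero := nonpos_iff_eq_zero.1 ((lintegral_div_sqrt_le_liminf_rhoVP hΦ hU).trans hρ.le)
  rw [mul_eq_zero, or_iff_right (ENNReal.ofReal_pos.2 two_pi_pos).ne',
    setLIntegral_eq_zero_iff (measurableSet_Ioi.prod measurableSet_Ioi) (by fun_prop)] at hzero
  filter_upwards [hzero] with p hp hmem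
  have hspeed : 0 < √(2 * (p.1 - l)) := Real.sqrt_pos.2 (mul_pos two_pos (sub_pos.2 hmem.1))
  simpa using (div_le_iff₀ hspeed).1 (ENNReal.ofReal_eq_zero.1 (hp hmem))

end Density

theorem cutoff_nonrelativistic
    (Φ : ℝ × ℝ → ℝ) (hΦmeas : Measurable Φ) (hΦnonneg : ∀ p, 0 ≤ Φ p)
    (U : ℝ → ℝ) (hUC1 : ContDiffOn ℝ 1 U (Ioi 0))
    (hU : ∀ r ∈ Ioi (0 : ℝ), HasDerivAt U
      ((4 * π / r ^ 2) *
        (∫⁻ s in Ioo (0 : ℝ) r, ENNReal.ofReal (s ^ 2) * rhoVP Φ U s).toReal) r)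
    (hM : ENNReal.ofReal (4 * π) *
        (∫⁻ r in Ioi (0 : ℝ), ENNReal.ofReal (r ^ 2) * rhoVP Φ U r) < ⊤) :
    ∃ Uinf : ℝ, Tendsto U atTop (nhds Uinf) ∧
      ∀ᵐ p : ℝ × ℝ, Uinf < p.1 → 0 < p.2 → Φ p = 0 := by
  have hmass : ∫⁻ r in Ioi (0 : ℝ), ENNReal.ofReal (r ^ 2) * rhoVP Φ U r ≠ ⊤ :=
    (ENNReal.lt_top_of_mul_ne_top_right hM.ne (ENNReal.ofReal_pos.2 (by positivity)).ne').ne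
  obtain ⟨l, hl⟩ := exists_tendsto_of_hasDerivAt_inverse_square hU hmass
  refine ⟨l, hl, ?_⟩
  filter_upwards [ae_nonpos_of_liminf_rhoVP_eq_zero hΦmeas hl
    (liminf_atTop_eq_zero_of_setLIntegral_Ioi_ne_top hmass)] with p hp hE hL
  exact le_antisymm (hp ⟨hE, hL⟩) (hΦnonneg p)
end

section
/- Let Φ : ℝ² → [0,∞) be measurable. Suppose λ, μ ∈ C¹((0,∞)) with λ extending continuously to 0 with λ(0) = 0, satisfying the field equations e^{−2λ(r)}(2rλ'(r) − 1) + 1 = 8πr²ρ(r) and e^{−2λ(r)}(2rμ'(r) + 1) − 1 = 8πr²p(r) for all r > 0, where ρ(r) = (2π/r²) e^{−2μ(r)} ∫_{e^{μ(r)}}^∞ ∫₀^{r²(E²e^{−2μ(r)}−1)} Φ(E,L) E² (E² − e^{2μ(r)}(1 + L/r²))^{−1/2} dL dE and p(r) = (2π/r²) e^{−2μ(r)} ∫_{e^{μ(r)}}^∞ ∫₀^{r²(E²e^{−2μ(r)}−1)} Φ(E,L) (E² − e^{2μ(r)}(1 + L/r²))^{1/2} dL dE. If the ADM mass M = 4π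 ∫₀^∞ r² ρ(r) dr is finite, then the limit μ_∞ = lim_{r→∞} μ(r) exists and is finite, and Φ(E,L) = 0 for almost every (E,L) with E > e^{μ_∞} and L > 0. -/
open MeasureTheory Real Set Filter
open scoped ENNReal

/-- The energy density induced by the ansatz `f(x,v) = Φ(E,L)` for the static
spherically symmetric Vlasov-Einstein system. -/
noncomputable def rhoVE (Φ : ℝ × ℝ → ℝ) (μ : ℝ → ℝ) (r : ℝ) : ℝ≥0∞ :=
  ENNReal.ofReal (2 * π / r ^ 2 * Real.exp (-2 * μ r)) *
    ∫⁻ E in Ioi (Real.exp (μ r)),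
      ∫⁻ L in Ioo (0 : ℝ) (r ^ 2 * (E ^ 2 * Real.exp (-2 * μ r) - 1)),
        ENNReal.ofReal (Φ (E, L) * E ^ 2 /
          Real.sqrt (E ^ 2 - Real.exp (2 * μ r) * (1 + L / r ^ 2)))

/-- The radial pressure induced by the ansatz `f(x,v) = Φ(E,L)` for the static
spherically symmetric Vlasov-Einstein system. -/
noncomputable def pVE (Φ : ℝ × ℝ → ℝ) (μ : ℝ → ℝ) (r : ℝ) : ℝ≥0∞ :=
  ENNReal.ofReal (2 * π / r ^ 2 * Real.exp (-2 * μ r)) *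
    ∫⁻ E in Ioi (Real.exp (μ r)),
      ∫⁻ L in Ioo (0 : ℝ) (r ^ 2 * (E ^ 2 * Real.exp (-2 * μ r) - 1)),
        ENNReal.ofReal (Φ (E, L) *
          Real.sqrt (E ^ 2 - Real.exp (2 * μ r) * (1 + L / r ^ 2)))

/-!
The field equations integrate to `e^{-2λ} = 1 - 2m/r` with `m' = 4πr²ρ`, and to
`μ' = e^{2λ}(m/r² + 4πrp)`. Finite mass makes `r²ρ` integrable near infinity, hence also `r²p`, as
`p ≤ ρ`. So `m` converges, `e^{2λ} → 1`, `μ'` is integrable near infinity and `μ` converges.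

Written in the variables `(E, L)`, the integrand of `r²ρ(r)` converges, at each point with
`E > e^{μ_∞}` and `L > 0`, to a positive multiple of `Φ(E, L)`. By Fatou's lemma the integral of
this limit is at most `liminf r²ρ(r)`, which vanishes because `r²ρ` is integrable on a half-line.
-/

open Asymptotics
open scoped Topology

section Integration

variable {α ι : Type*} [MeasurableSpace α] {ν : Measure α}

lemma liminf_eq_zero_of_lintegral_ne_top_s1 {l : Filter α} [l.IsMeasurablyGenerated]
    (hl : ∀ s ∈ l, ν s = ⊤) {f : α → ℝ≥0∞} (hf : ∫⁻ x, f x ∂ν ≠ ⊤) : liminf f l = 0 := by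
  by_contra hne
  obtain ⟨c, hc, hcf⟩ := exists_between (pos_iff_ne_zero.2 hne)
  obtain ⟨s, hsl, hs, hcs⟩ := (eventually_lt_of_lt_liminf hcf).exists_measurable_mem
  refine hf (top_le_iff.1 ?_)
  calc (⊤ : ℝ≥0∞) = ∫⁻ _ in s, c ∂ν := by
        rw [setLIntegral_const, hl s hsl, ENNReal.mul_top hc.ne']
    _ ≤ ∫⁻ x in s, f x ∂ν := setLIntegral_mono' hs fun x hx => (hcs x hx).le
    _ ≤ ∫⁻ x, f x ∂ν := setLIntegral_le_lintegral s f

lemma volume_restrict_Ioi_eq_top_of_mem_atTop (a : ℝ) {s : Set ℝ} (hs : s ∈ atTop) :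
    volume.restrict (Ioi a) s = ⊤ := by
  obtain ⟨b, hb⟩ := mem_atTop_sets.1 hs
  rw [← top_le_iff, ← Real.volume_Ioi (a := max a b)]
  refine le_trans (measure_mono ?_) (Measure.le_restrict_apply (Ioi a) s)
  exact fun x hx => ⟨hb x ((le_max_right a b).trans (le_of_lt hx)), (le_max_left a b).trans_lt hx⟩

lemma setLIntegral_le_liminf_setLIntegral {l : Filter ι} [l.NeBot] [l.IsCountablyGenerated]
    {s : ι → Set α} {t : Set α} (hs : ∀ i, MeasurableSet (s i)) (ht : MeasurableSet t)
    {f : ι → α → ℝ≥0∞} {g : α → ℝ≥0∞} (hf : ∀ i, Measurable (f i))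
    (hst : ∀ x ∈ t, ∀ᶠ i in l, x ∈ s i) (hfg : ∀ x ∈ t, Tendsto (fun i => f i x) l (𝓝 (g x))) :
    ∫⁻ x in t, g x ∂ν ≤ liminf (fun i => ∫⁻ x in s i, f i x ∂ν) l := by
  have hlim : ∀ x ∈ t, g x = liminf (fun i => (s i).indicator (f i) x) l := fun x hx =>
    ((hfg x hx).congr' <| (hst x hx).mono fun i hi =>
      (indicator_of_mem hi (f i)).symm).liminf_eq.symm
  calc ∫⁻ x in t, g x ∂ν
      = ∫⁻ x in t, liminf (fun i => (s i).indicator (f i) x) l ∂ν := setLIntegral_congr_fun ht hlim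
    _ ≤ ∫⁻ x, liminf (fun i => (s i).indicator (f i) x) l ∂ν := setLIntegral_le_lintegral t _
    _ ≤ liminf (fun i => ∫⁻ x, (s i).indicator (f i) x ∂ν) l :=
        lintegral_liminf_le fun i => (hf i).indicator (hs i)
    _ = liminf (fun i => ∫⁻ x in s i, f i x ∂ν) l := by simp only [lintegral_indicator (hs _)]

lemma setLIntegral_regionBetween [SFinite ν] {f g : α → ℝ} {s : Set α} (hf : Measurable f)
    (hg : Measurable g) (hs : MeasurableSet s) {h : α × ℝ → ℝ≥0∞} (hh : Measurable h) :
    ∫⁻ p in regionBetween f g s, h p ∂(ν.prod volume) =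
      ∫⁻ x in s, (∫⁻ y in Ioo (f x) (g x), h (x, y)) ∂ν := by
  have hmeas := measurableSet_regionBetween hf hg hs
  rw [← lintegral_indicator hmeas, lintegral_prod _ (hh.indicator hmeas).aemeasurable,
    ← lintegral_indicator hs]
  refine lintegral_congr fun x => ?_
  by_cases hx : x ∈ s
  · rw [indicator_of_mem hx, ← lintegral_indicator measurableSet_Ioo]
    refine lintegral_congr fun y => ?_
    simp only [indicator, regionBetween, mem_ofPred_eq, hx, true_and]
  · simp [regionBetween, hx]

end Integration

lemma exists_tendsto_of_deriv_isBigO {F : Type*} [NormedAddCommGroup F] [NormedSpace ℝ F]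
    [CompleteSpace F] {f : ℝ → F} {g : ℝ → ℝ} (hf : ∀ᶠ x in atTop, DifferentiableAt ℝ f x)
    (hfg : deriv f =O[atTop] g) (hg : IntegrableAtFilter g atTop) :
    ∃ y, Tendsto f atTop (𝓝 y) := by
  obtain ⟨s, hs, hint⟩ := hfg.integrableAtFilter
    (aestronglyMeasurable_deriv f volume).stronglyMeasurableAtFilter hg
  obtain ⟨a, ha⟩ := mem_atTop_sets.1 (hf.and hs)
  exact ⟨_, tendsto_limUnder_of_hasDerivAt_of_integrableOn_Ioi (a := a)
    (fun x hx => (ha x (le_of_lt hx)).1.hasDerivAt)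
    (hint.mono_set fun x hx => (ha x (le_of_lt hx)).2)⟩

lemma exp_two_mul_mul_exp_neg_two_mul (x : ℝ) : Real.exp (2 * x) * Real.exp (-2 * x) = 1 := by
  rw [← Real.exp_add]
  simp

section FieldEquations

/-- The quasilocal mass `m(r)` of the metric coefficient `λ`, solved from
`e^{-2λ(r)} = 1 - 2m(r)/r`. Unlike `4π ∫₀^r s²ρ(s) ds` it does not presuppose a regular center. -/
noncomputable def quasilocalMass (lam : ℝ → ℝ) (r : ℝ) : ℝ :=
  r * (1 - Real.exp (-2 * lam r)) / 2

variable {lam mu ρ P : ℝ → ℝ}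

lemma exp_neg_two_mul_eq_one_sub_quasilocalMass {r : ℝ} (hr : r ≠ 0) :
    Real.exp (-2 * lam r) = 1 - 2 * quasilocalMass lam r / r := by
  unfold quasilocalMass
  field_simp
  ring

lemma hasDerivAt_quasilocalMass {r d : ℝ} (hlam : DifferentiableAt ℝ lam r)
    (hfield : Real.exp (-2 * lam r) * (2 * r * deriv lam r - 1) + 1 = 8 * π * r ^ 2 * d) :
    HasDerivAt (quasilocalMass lam) (4 * π * (r ^ 2 * d)) r := by
  have h := ((hasDerivAt_id r).mul ((hlam.hasDerivAt.const_mul (-2)).exp.const_sub 1)).div_const 2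
  refine h.congr_deriv ?_
  simp only [id]
  linarith

lemma exists_tendsto_quasilocalMass (hlam : ∀ᶠ r in atTop, DifferentiableAt ℝ lam r)
    (hfield : ∀ᶠ r in atTop,
      Real.exp (-2 * lam r) * (2 * r * deriv lam r - 1) + 1 = 8 * π * r ^ 2 * ρ r)
    (hρ : IntegrableAtFilter (fun r => r ^ 2 * ρ r) atTop) :
    ∃ M, Tendsto (quasilocalMass lam) atTop (𝓝 M) := by
  have hderiv : ∀ᶠ r in atTop, HasDerivAt (quasilocalMass lam) (4 * π * (r ^ 2 * ρ r)) r := by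
    filter_upwards [hlam, hfield] with r using hasDerivAt_quasilocalMass
  refine exists_tendsto_of_deriv_isBigO (hderiv.mono fun r h => h.differentiableAt) ?_ hρ
  exact (isBigO_const_mul_self (4 * π) _ atTop).congr' (hderiv.mono fun r h => h.deriv.symm) .rfl

lemma deriv_eq_exp_mul_of_field {r d : ℝ} (hr : r ≠ 0)
    (hfield : Real.exp (-2 * lam r) * (2 * r * deriv mu r + 1) - 1 = 8 * π * r ^ 2 * d) :
    deriv mu r =
      Real.exp (2 * lam r) * (quasilocalMass lam r * r ^ (-2 : ℝ) + 4 * π * r⁻¹ * (r ^ 2 * d)) := by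
  have hmass := exp_neg_two_mul_eq_one_sub_quasilocalMass (lam := lam) hr
  have hexpr : quasilocalMass lam r * r ^ (-2 : ℝ) + 4 * π * r⁻¹ * (r ^ 2 * d) =
      Real.exp (-2 * lam r) * deriv mu r := by
    rw [show r ^ (-2 : ℝ) = (r ^ 2)⁻¹ by simp]
    have hmul : Real.exp (-2 * lam r) * (2 * r * deriv mu r) =
        2 * quasilocalMass lam r / r + 8 * π * r ^ 2 * d := by
      linear_combination hfield - hmass
    field_simp at hmul ⊢
    linear_combination -hmul / 2
  rw [hexpr, ← mul_assoc, exp_two_mul_mul_exp_neg_two_mul, one_mul]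

lemma tendsto_exp_two_mul_of_tendsto_quasilocalMass {M : ℝ}
    (hM : Tendsto (quasilocalMass lam) atTop (𝓝 M)) :
    Tendsto (fun r => Real.exp (2 * lam r)) atTop (𝓝 1) := by
  have h : Tendsto (fun r => (1 - 2 * quasilocalMass lam r / r)⁻¹) atTop (𝓝 (1 - 0)⁻¹) :=
    (((hM.const_mul 2).div_atTop tendsto_id).const_sub 1).inv₀ (by norm_num)
  rw [sub_zero, inv_one] at h
  refine h.congr' ?_
  filter_upwards [eventually_ne_atTop 0] with r hr
  rw [← exp_neg_two_mul_eq_one_sub_quasilocalMass hr]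
  exact (eq_inv_of_mul_eq_one_left (exp_two_mul_mul_exp_neg_two_mul (lam r))).symm

lemma exists_tendsto_of_field {M : ℝ} (hmu : ∀ᶠ r in atTop, DifferentiableAt ℝ mu r)
    (hM : Tendsto (quasilocalMass lam) atTop (𝓝 M))
    (hfield : ∀ᶠ r in atTop,
      Real.exp (-2 * lam r) * (2 * r * deriv mu r + 1) - 1 = 8 * π * r ^ 2 * P r)
    (hP : IntegrableAtFilter (fun r => r ^ 2 * P r) atTop) :
    ∃ muinf, Tendsto mu atTop (𝓝 muinf) := by
  have hrpow : IntegrableAtFilter (fun r : ℝ => r ^ (-2 : ℝ)) atTop :=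
    integrableAtFilter_rpow_atTop_iff.2 (by norm_num)
  refine exists_tendsto_of_deriv_isBigO hmu ?_ (hrpow.norm.add hP.norm)
  have hderiv : deriv mu =ᶠ[atTop] fun r => Real.exp (2 * lam r) *
      (quasilocalMass lam r * r ^ (-2 : ℝ) + 4 * π * r⁻¹ * (r ^ 2 * P r)) := by
    filter_upwards [hfield, eventually_ne_atTop 0] with r h hr using deriv_eq_exp_mul_of_field hr h
  have hexp : (fun r => Real.exp (2 * lam r)) =O[atTop] fun _ => (1 : ℝ) :=
    (tendsto_exp_two_mul_of_tendsto_quasilocalMass hM).isBigO_one ℝ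
  have hmass : (fun r => quasilocalMass lam r * r ^ (-2 : ℝ)) =O[atTop] fun r => r ^ (-2 : ℝ) := by
    simpa using (hM.isBigO_one ℝ).mul (isBigO_refl (fun r : ℝ => r ^ (-2 : ℝ)) atTop)
  have hpress : (fun r => 4 * π * r⁻¹ * (r ^ 2 * P r)) =O[atTop] fun r => r ^ 2 * P r := by
    simpa using ((tendsto_inv_atTop_zero.const_mul (4 * π)).isBigO_one ℝ).mul
      (isBigO_refl (fun r => r ^ 2 * P r) atTop)
  have hprod := hexp.mul (hmass.add_add hpress)
  simp only [one_mul] at hprod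
  exact hderiv.trans_isBigO hprod

end FieldEquations

section MatterTerms

variable {Φ : ℝ × ℝ → ℝ} {μ : ℝ → ℝ} {r m : ℝ}

lemma radicand_pos {E L : ℝ} (hr : r ≠ 0) (hL : L < r ^ 2 * (E ^ 2 * Real.exp (-2 * m) - 1)) :
    0 < E ^ 2 - Real.exp (2 * m) * (1 + L / r ^ 2) := by
  have hdiv : 1 + L / r ^ 2 < E ^ 2 * Real.exp (-2 * m) := by
    rwa [← lt_sub_iff_add_lt', div_lt_iff₀' (by positivity)]
  linear_combination Real.exp (2 * m) * hdiv + E ^ 2 * exp_two_mul_mul_exp_neg_two_mul m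

lemma pVE_le_rhoVE (hΦ : ∀ p, 0 ≤ Φ p) (hr : r ≠ 0) : pVE Φ μ r ≤ rhoVE Φ μ r := by
  unfold pVE rhoVE
  refine mul_le_mul_right (setLIntegral_mono' measurableSet_Ioi fun E _ =>
    setLIntegral_mono' measurableSet_Ioo fun L hL => ENNReal.ofReal_le_ofReal ?_) _
  have hX := radicand_pos hr hL.2
  have hL0 := hL.1
  rw [mul_div_assoc]
  refine mul_le_mul_of_nonneg_left ?_ (hΦ _)
  rw [le_div_iff₀ (Real.sqrt_pos.2 hX), Real.mul_self_sqrt hX.le, sub_le_self_iff]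
  positivity

/-- The values `(E, L)` attained by particles at radius `r` where `μ(r) = m`, that is, the domain
of integration of `ρ(r)` and `p(r)`. -/
def phaseRegion (r m : ℝ) : Set (ℝ × ℝ) :=
  regionBetween (fun _ => 0) (fun E => r ^ 2 * (E ^ 2 * Real.exp (-2 * m) - 1)) (Ioi (Real.exp m))

lemma measurableSet_phaseRegion (r m : ℝ) : MeasurableSet (phaseRegion r m) :=
  measurableSet_regionBetween measurable_const (by fun_prop) measurableSet_Ioi

/-- The integrand of `r²ρ(r)` in the variables `(E, L)`, where `μ(r) = m`. -/
noncomputable def shellDensity (Φ : ℝ × ℝ → ℝ) (r m : ℝ) (p : ℝ × ℝ) : ℝ :=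
  2 * π * Real.exp (-2 * m) *
    (Φ p * p.1 ^ 2 / Real.sqrt (p.1 ^ 2 - Real.exp (2 * m) * (1 + p.2 / r ^ 2)))

lemma measurable_shellDensity (hΦ : Measurable Φ) (r m : ℝ) : Measurable (shellDensity Φ r m) := by
  unfold shellDensity
  fun_prop

lemma sq_mul_rhoVE (hΦ : Measurable Φ) (hr : r ≠ 0) :
    ENNReal.ofReal (r ^ 2) * rhoVE Φ μ r =
      ∫⁻ p in phaseRegion r (μ r), ENNReal.ofReal (shellDensity Φ r (μ r) p) := by
  have hconst : r ^ 2 * (2 * π / r ^ 2 * Real.exp (-2 * μ r)) = 2 * π * Real.exp (-2 * μ r) := by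
    field_simp
  rw [rhoVE, ← mul_assoc, ← ENNReal.ofReal_mul (by positivity), hconst]
  simp only [shellDensity]
  simp_rw [ENNReal.ofReal_mul (show 0 ≤ 2 * π * Real.exp (-2 * μ r) by positivity)]
  rw [lintegral_const_mul' _ _ ENNReal.ofReal_ne_top, phaseRegion, Measure.volume_eq_prod,
    setLIntegral_regionBetween measurable_const (by fun_prop) measurableSet_Ioi (by fun_prop)]

variable {p : ℝ × ℝ}

lemma exp_two_mul_lt_sq {E : ℝ} (hE : Real.exp m < E) : Real.exp (2 * m) < E ^ 2 := by
  rw [two_mul, Real.exp_add, ← sq]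
  gcongr

lemma eventually_mem_phaseRegion (hμ : Tendsto μ atTop (𝓝 m)) (hE : Real.exp m < p.1)
    (hL : 0 < p.2) : ∀ᶠ r in atTop, p ∈ phaseRegion r (μ r) := by
  have hpos : 0 < p.1 ^ 2 * Real.exp (-2 * m) - 1 := by
    rw [neg_mul, Real.exp_neg, ← div_eq_mul_inv, sub_pos, one_lt_div (Real.exp_pos _)]
    exact exp_two_mul_lt_sq hE
  have hbound : Tendsto (fun r => r ^ 2 * (p.1 ^ 2 * Real.exp (-2 * μ r) - 1)) atTop atTop :=
    (tendsto_pow_atTop two_ne_zero).atTop_mul_pos hpos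
      (((hμ.const_mul (-2)).rexp.const_mul (p.1 ^ 2)).sub_const 1)
  filter_upwards [hμ.rexp.eventually_lt_const hE, hbound.eventually_gt_atTop p.2] with r h₁ h₂
  exact ⟨h₁, hL, h₂⟩

lemma tendsto_shellDensity (hμ : Tendsto μ atTop (𝓝 m)) (hE : Real.exp m < p.1) :
    Tendsto (fun r => shellDensity Φ r (μ r) p) atTop (𝓝 (2 * π * Real.exp (-2 * m) *
      (Φ p * p.1 ^ 2 / Real.sqrt (p.1 ^ 2 - Real.exp (2 * m))))) := by
  have hpos : 0 < Real.sqrt (p.1 ^ 2 - Real.exp (2 * m)) :=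
    Real.sqrt_pos.2 (sub_pos.2 (exp_two_mul_lt_sq hE))
  have hL : Tendsto (fun r : ℝ => 1 + p.2 / r ^ 2) atTop (𝓝 (1 + 0)) :=
    (tendsto_const_nhds.div_atTop (tendsto_pow_atTop two_ne_zero)).const_add 1
  have hsqrt := (((hμ.const_mul 2).rexp.mul hL).const_sub (p.1 ^ 2)).sqrt
  rw [add_zero, mul_one] at hsqrt
  exact ((hμ.const_mul (-2)).rexp.const_mul (2 * π)).mul
    (tendsto_const_nhds.div hsqrt hpos.ne')

lemma ae_eq_zero_of_tendsto (hΦmeas : Measurable Φ) (hΦ : ∀ p, 0 ≤ Φ p)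
    (hμ : Tendsto μ atTop (𝓝 m)) {r₀ : ℝ}
    (hM : ∫⁻ r in Ioi r₀, ENNReal.ofReal (r ^ 2) * rhoVE Φ μ r ≠ ⊤) :
    ∀ᵐ p : ℝ × ℝ, Real.exp m < p.1 → 0 < p.2 → Φ p = 0 := by
  have hquad : MeasurableSet (Ioi (Real.exp m) ×ˢ Ioi (0 : ℝ)) :=
    measurableSet_Ioi.prod measurableSet_Ioi
  have hliminf : liminf (fun r => ∫⁻ p in phaseRegion r (μ r),
      ENNReal.ofReal (shellDensity Φ r (μ r) p)) atTop = 0 := by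
    rw [← liminf_eq_zero_of_lintegral_ne_top_s1
      (fun _ => volume_restrict_Ioi_eq_top_of_mem_atTop r₀) hM]
    refine liminf_congr ?_
    filter_upwards [eventually_ne_atTop 0] with r hr using (sq_mul_rhoVE hΦmeas hr).symm
  have hzero : ∫⁻ p in Ioi (Real.exp m) ×ˢ Ioi (0 : ℝ), ENNReal.ofReal (2 * π * Real.exp (-2 * m) *
      (Φ p * p.1 ^ 2 / Real.sqrt (p.1 ^ 2 - Real.exp (2 * m)))) = 0 := by
    refine le_antisymm (le_of_le_of_eq ?_ hliminf) zero_le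
    exact setLIntegral_le_liminf_setLIntegral (fun r => measurableSet_phaseRegion r (μ r)) hquad
      (fun r => (measurable_shellDensity hΦmeas r (μ r)).ennreal_ofReal)
      (fun p hp => eventually_mem_phaseRegion hμ hp.1 hp.2)
      (fun p hp => ENNReal.tendsto_ofReal (tendsto_shellDensity hμ hp.1))
  filter_upwards [(setLIntegral_eq_zero_iff hquad (by fun_prop)).1 hzero] with p hp hE hL
  have hE0 : 0 < p.1 := (Real.exp_pos m).trans hE
  have hsqrt := Real.sqrt_pos.2 (sub_pos.2 (exp_two_mul_lt_sq hE))
  by_contra hne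
  have hΦpos : 0 < Φ p := (hΦ p).lt_of_ne' hne
  refine (ENNReal.ofReal_pos.2 ?_).ne' (hp ⟨hE, hL⟩)
  positivity

end MatterTerms
lemma integrableOn_sq_mul_toReal {f : ℝ → ℝ≥0∞} {F : ℝ → ℝ} {s : Set ℝ} (hs : MeasurableSet s)
    (hF : AEMeasurable F (volume.restrict s))
    (hfF : ∀ r ∈ s, F r = 8 * π * r ^ 2 * (f r).toReal)
    (hf : ∫⁻ r in s, ENNReal.ofReal (r ^ 2) * f r ≠ ⊤) :
    IntegrableOn (fun r => r ^ 2 * (f r).toReal) s := by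
  have htoReal : ∀ r, (ENNReal.ofReal (r ^ 2) * f r).toReal = r ^ 2 * (f r).toReal := fun r => by
    rw [ENNReal.toReal_mul, ENNReal.toReal_ofReal (sq_nonneg r)]
  have hmeas : AEMeasurable (fun r => r ^ 2 * (f r).toReal) (volume.restrict s) := by
    refine (hF.div_const (8 * π)).congr ((ae_restrict_iff' hs).2 (.of_forall fun r hr => ?_))
    simp only [hfF r hr]
    field_simp
  simp only [← htoReal] at hmeas ⊢
  exact ⟨hmeas.aestronglyMeasurable, hasFiniteIntegral_toReal_of_lintegral_ne_top hf⟩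

theorem cutoff_relativistic_general
    (Φ : ℝ × ℝ → ℝ) (hΦmeas : Measurable Φ) (hΦnonneg : ∀ p, 0 ≤ Φ p)
    (lam mu : ℝ → ℝ) {r₀ : ℝ} (hr₀ : 0 ≤ r₀)
    (hlam : DifferentiableOn ℝ lam (Ioi r₀)) (hmu : DifferentiableOn ℝ mu (Ioi r₀))
    (hfield1 : ∀ r ∈ Ioi r₀,
      Real.exp (-2 * lam r) * (2 * r * deriv lam r - 1) + 1 =
        8 * π * r ^ 2 * (rhoVE Φ mu r).toReal)
    (hfield2 : ∀ r ∈ Ioi r₀,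
      Real.exp (-2 * lam r) * (2 * r * deriv mu r + 1) - 1 =
        8 * π * r ^ 2 * (pVE Φ mu r).toReal)
    (hM : ∫⁻ r in Ioi r₀, ENNReal.ofReal (r ^ 2) * rhoVE Φ mu r ≠ ⊤) :
    ∃ muinf : ℝ, Tendsto mu atTop (𝓝 muinf) ∧
      ∀ᵐ p : ℝ × ℝ, Real.exp muinf < p.1 → 0 < p.2 → Φ p = 0 := by
  have hr : ∀ᶠ r in atTop, r ∈ Ioi r₀ := Ioi_mem_atTop r₀
  have hlam_meas : AEMeasurable lam (volume.restrict (Ioi r₀)) :=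
    hlam.continuousOn.aemeasurable measurableSet_Ioi
  have hp : ∫⁻ r in Ioi r₀, ENNReal.ofReal (r ^ 2) * pVE Φ mu r ≠ ⊤ :=
    ne_top_of_le_ne_top hM <| setLIntegral_mono' measurableSet_Ioi fun r hr => by
      gcongr
      exact pVE_le_rhoVE hΦnonneg (hr₀.trans_lt hr).ne'
  have hρ_int := integrableOn_sq_mul_toReal measurableSet_Ioi (by fun_prop) hfield1 hM
  have hp_int := integrableOn_sq_mul_toReal measurableSet_Ioi (by fun_prop) hfield2 hp
  obtain ⟨M, hmass⟩ := exists_tendsto_quasilocalMass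
    (hr.mono fun r h => hlam.differentiableAt (Ioi_mem_nhds h)) (hr.mono hfield1)
    ⟨_, hr, hρ_int⟩
  obtain ⟨muinf, hmuinf⟩ := exists_tendsto_of_field
    (hr.mono fun r h => hmu.differentiableAt (Ioi_mem_nhds h)) hmass (hr.mono hfield2)
    ⟨_, hr, hp_int⟩
  exact ⟨muinf, hmuinf, ae_eq_zero_of_tendsto hΦmeas hΦnonneg hmuinf hM⟩

theorem cutoff_relativistic
    (Φ : ℝ × ℝ → ℝ) (hΦmeas : Measurable Φ) (hΦnonneg : ∀ p, 0 ≤ Φ p)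
    (lam mu : ℝ → ℝ)
    (hlamC1 : ContDiffOn ℝ 1 lam (Ioi 0)) (hmuC1 : ContDiffOn ℝ 1 mu (Ioi 0))
    (hlamcont : ContinuousOn lam (Ici 0)) (hlam0 : lam 0 = 0)
    (hfield1 : ∀ r ∈ Ioi (0 : ℝ),
      Real.exp (-2 * lam r) * (2 * r * deriv lam r - 1) + 1 =
        8 * π * r ^ 2 * (rhoVE Φ mu r).toReal)
    (hfield2 : ∀ r ∈ Ioi (0 : ℝ),
      Real.exp (-2 * lam r) * (2 * r * deriv mu r + 1) - 1 =
        8 * π * r ^ 2 * (pVE Φ mu r).toReal)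
    (hM : ENNReal.ofReal (4 * π) *
        (∫⁻ r in Ioi (0 : ℝ), ENNReal.ofReal (r ^ 2) * rhoVE Φ mu r) < ⊤) :
    ∃ muinf : ℝ, Tendsto mu atTop (nhds muinf) ∧
      ∀ᵐ p : ℝ × ℝ, Real.exp muinf < p.1 → 0 < p.2 → Φ p = 0 := by
  exact cutoff_relativistic_general Φ hΦmeas hΦnonneg lam mu le_rfl
    (hlamC1.differentiableOn one_ne_zero) (hmuC1.differentiableOn one_ne_zero) hfield1 hfield2
    (ENNReal.lt_top_of_mul_ne_top_right hM.ne (by simp [pi_pos])).ne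
end

section
/- Let E_min ∈ {−∞, 0}, let φ : (E_min, ∞) → [0,∞) be measurable, E₀ > E_min, and k > −1 such that on every compact subset K ⊂ (E_min, ∞) there is a constant C ≥ 0 with 0 ≤ φ(E) ≤ C (E₀ − E)₊^k for all E ∈ K. If m > −1 and k + m + 1 > 0, then the function g_m(u) = ∫_u^∞ φ(E)(E − u)^m dE is continuous on (E_min, ∞). -/
open MeasureTheory Real Set

/-!
Splitting the integral at some `c > u₀`, the part over `(u, c]` is the convolution of a truncation
of `φ` with a truncation of `x ↦ x₊ ^ m` (up to a reflection). The hypotheses `-1 < k`, `-1 < m` and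
`0 < k + m + 1` are what is needed for Hölder conjugate exponents `p`, `q` with `-1 < k * p` and
`-1 < m * q` to exist. Then `φ` is locally in `L^p` and the kernel is in `L^q`, so continuity
follows from continuity of translations in `L^q`. The part over `(c, ∞)` has no singularity and is
handled by dominated convergence.
-/

open Filter Topology

section Translation

variable {G E F H : Type*} [AddGroup G] [TopologicalSpace G] [IsTopologicalAddGroup G]
  [MeasurableSpace G] [BorelSpace G] {μ : Measure G} [μ.IsAddLeftInvariant]
  [IsLocallyFiniteMeasure μ] [μ.InnerRegularCompactLTTop]
  [NormedAddCommGroup E] [NormedSpace ℝ E] [NormedAddCommGroup F] [NormedSpace ℝ F]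
  [NormedAddCommGroup H] [NormedSpace ℝ H] [CompleteSpace H]

theorem continuous_integral_bilin_translate {p q : ENNReal} [hpq : p.HolderConjugate q]
    (hp : p ≠ ⊤) (B : E →L[ℝ] F →L[ℝ] H) {f : G → E} {g : G → F} (hf : MemLp f p μ)
    (hg : MemLp g q μ) : Continuous fun u => ∫ x, B (f (u + x)) (g x) ∂μ := by
  have : Fact (1 ≤ p) := ⟨hpq.one_le⟩
  have : Fact (1 ≤ q) := ⟨hpq.symm.one_le⟩
  have : Fact (p ≠ ⊤) := ⟨hp⟩
  have hpairing : Continuous fun u : G =>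
      B.lpPairing μ p q (DomAddAct.mk u +ᵥ hf.toLp f) (hg.toLp g) := by fun_prop
  refine hpairing.congr fun u => ?_
  rw [B.lpPairing_eq_integral, DomAddAct.mk_vadd_toLp]
  refine integral_congr_ae ?_
  filter_upwards [MemLp.coeFn_toLp
    (hf.comp_measurePreserving (measurePreserving_vadd u μ)), hg.coeFn_toLp] with x hfx hgx
  exact congr_arg₂ (fun y z => B y z) hfx hgx

end Translation

theorem exists_holderConjugate_neg_one_lt_mul {k m : ℝ} (hk : -1 < k) (hm : -1 < m)
    (hkm : 0 < k + m + 1) :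
    ∃ p q : ℝ, p.HolderConjugate q ∧ -1 < k * p ∧ -1 < m * q := by
  obtain ⟨a, ha, ha'⟩ : ∃ a, max 0 (-k) < a ∧ a < min 1 (1 + m) :=
    exists_between (max_lt (lt_min one_pos (by linarith)) (lt_min (by linarith) (by linarith)))
  obtain ⟨ha₀, hka⟩ := max_lt_iff.1 ha
  obtain ⟨ha₁, hma⟩ := lt_min_iff.1 ha'
  refine ⟨a⁻¹, (1 - a)⁻¹, .inv_one_sub_inv ha₀ ha₁, ?_, ?_⟩
  · rw [← div_eq_mul_inv, lt_div_iff₀ ha₀]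
    linarith
  · rw [← div_eq_mul_inv, lt_div_iff₀ (by linarith)]
    linarith

theorem memLp_max_zero_rpow {p r : ℝ} (hp : 0 < p) (hr : -1 < r * p) (a b : ℝ) :
    MemLp (fun x : ℝ => max x 0 ^ r) (ENNReal.ofReal p) (volume.restrict (Ioc a b)) := by
  have hmeas (s : ℝ) : Measurable fun x : ℝ => max x 0 ^ s := by fun_prop
  rw [← integrable_norm_rpow_iff (hmeas r).aestronglyMeasurable (by simpa using hp) (by simp),
    ENNReal.toReal_ofReal hp.le]
  have hpow (x : ℝ) : ‖max x 0 ^ r‖ ^ p = max x 0 ^ (r * p) := by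
    rw [norm_of_nonneg (by positivity), ← rpow_mul (by positivity)]
  simp_rw [hpow]
  refine (((intervalIntegral.intervalIntegrable_rpow' hr).norm.add
    (intervalIntegrable_const (c := (1 : ℝ)))).1).mono' (hmeas _).aestronglyMeasurable
    (Eventually.of_forall fun x => ?_)
  rw [norm_of_nonneg (by positivity)]
  rcases le_total x 0 with hx | hx
  · rw [max_eq_right hx]
    exact (zero_rpow_le_one _).trans (le_add_of_nonneg_left (norm_nonneg _))
  · rw [max_eq_left hx]
    exact (le_norm_self _).trans (le_add_of_nonneg_right zero_le_one)

theorem memLp_max_sub_zero_rpow {p r : ℝ} (hp : 0 < p) (hr : -1 < r * p) (a b c : ℝ) :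
    MemLp (fun x : ℝ => max (c - x) 0 ^ r) (ENNReal.ofReal p) (volume.restrict (Ioc a b)) := by
  -- The reflection maps `(a, b]` onto `[c - b, c - a)`, which a larger half-open interval covers.
  have hreflect := (Measure.measurePreserving_sub_left (volume : Measure ℝ) c).restrict_preimage
    (measurableSet_Ioc (a := c - b - 1) (b := c - a))
  refine ((memLp_max_zero_rpow hp hr _ _).comp_measurePreserving hreflect).mono_measure
    (Measure.restrict_mono (fun x hx => ?_) le_rfl)
  exact ⟨by linarith [hx.2], by linarith [hx.1]⟩

section PowerKernel

variable {F : Type*} [NormedAddCommGroup F] [NormedSpace ℝ F] {φ : ℝ → F}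
  {a c m p q u u₀ v E : ℝ}

theorem indicator_Ioc_rpow_smul_indicator_Ioc (hau : a ≤ u) (E : ℝ) :
    (Ioc 0 (c - a)).indicator (fun x => x ^ m) (-u + E) • (Ioc a c).indicator φ E =
      (Ioc u c).indicator (fun E => (E - u) ^ m • φ E) E := by
  by_cases hE : E ∈ Ioc u c
  · have hshift : -u + E ∈ Ioc 0 (c - a) := ⟨by linarith [hE.1], by linarith [hE.2]⟩
    have hEac : E ∈ Ioc a c := Ioc_subset_Ioc_left hau hE
    rw [indicator_of_mem hshift, indicator_of_mem hEac, indicator_of_mem hE,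
      neg_add_eq_sub]
  · rw [indicator_of_notMem hE, smul_eq_zero, indicator_apply_eq_zero, indicator_apply_eq_zero]
    by_cases hEc : E ≤ c
    · exact .inl fun hshift => (hE ⟨by linarith [hshift.1], hEc⟩).elim
    · exact .inr fun hEac => (hEc hEac.2).elim

theorem memLp_indicator_Ioc_rpow (hq : 0 < q) (hm : -1 < m * q) (b : ℝ) :
    MemLp ((Ioc 0 b).indicator fun x : ℝ => x ^ m) (ENNReal.ofReal q) := by
  have hmax : (Ioc 0 b).indicator (fun x : ℝ => x ^ m) =
      (Ioc 0 b).indicator fun x => max x 0 ^ m :=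
    indicator_congr fun x hx => by rw [max_eq_left hx.1.le]
  rw [hmax, memLp_indicator_iff_restrict measurableSet_Ioc]
  exact memLp_max_zero_rpow hq hm 0 b

theorem integrableOn_Ioc_sub_rpow_smul (hpq : p.HolderConjugate q)
    (hφ : MemLp φ (ENNReal.ofReal p) (volume.restrict (Ioc a c))) (hm : -1 < m * q)
    (hau : a ≤ u) : IntegrableOn (fun E => (E - u) ^ m • φ E) (Ioc u c) := by
  have := hpq.symm.ennrealOfReal
  have hφ' := (memLp_indicator_iff_restrict measurableSet_Ioc).2 hφ
  have hkernel := (memLp_indicator_Ioc_rpow hpq.symm.pos hm (c - a)).comp_measurePreserving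
    (measurePreserving_add_left volume (-u))
  rw [← integrable_indicator_iff measurableSet_Ioc, ← memLp_one_iff_integrable]
  exact (hφ'.smul hkernel).ae_eq
    (Eventually.of_forall fun E => indicator_Ioc_rpow_smul_indicator_Ioc hau E)

theorem continuousOn_setIntegral_Ioc_sub_rpow_smul [CompleteSpace F] (hpq : p.HolderConjugate q)
    (hφ : MemLp φ (ENNReal.ofReal p) (volume.restrict (Ioc a c))) (hm : -1 < m * q) :
    ContinuousOn (fun u => ∫ E in Ioc u c, (E - u) ^ m • φ E) (Ici a) := by
  have := hpq.symm.ennrealOfReal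
  have hconv := continuous_integral_bilin_translate ENNReal.ofReal_ne_top
    (ContinuousLinearMap.lsmul ℝ ℝ : ℝ →L[ℝ] F →L[ℝ] F)
    (memLp_indicator_Ioc_rpow hpq.symm.pos hm (c - a))
    ((memLp_indicator_iff_restrict measurableSet_Ioc).2 hφ)
  refine (hconv.comp continuous_neg).continuousOn.congr fun u hu => ?_
  simp only [Function.comp_apply, ContinuousLinearMap.lsmul_apply,
    indicator_Ioc_rpow_smul_indicator_Ioc (mem_Ici.1 hu), integral_indicator measurableSet_Ioc]

theorem rpow_le_two_rpow_abs_mul {x y : ℝ} (m : ℝ) (hx : 0 < x) (hxy : x ≤ 2 * y)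
    (hyx : y ≤ 2 * x) : y ^ m ≤ 2 ^ |m| * x ^ m := by
  rcases le_total 0 m with hm | hm
  · rw [abs_of_nonneg hm, ← mul_rpow zero_le_two hx.le]
    exact rpow_le_rpow (by linarith) hyx hm
  · rw [abs_of_nonpos hm, rpow_neg zero_le_two, ← inv_rpow zero_le_two,
      ← mul_rpow (by positivity) hx.le]
    exact rpow_le_rpow_of_nonpos (by positivity) (by linarith) hm

theorem norm_sub_rpow_smul_le (m : ℝ) (x : F) (huv : 2 * |u - v| ≤ c - u) (hE : c < E) :
    ‖(E - v) ^ m • x‖ ≤ 2 ^ |m| * ‖(E - u) ^ m • x‖ := by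
  have hlower := neg_abs_le (u - v)
  have hupper := le_abs_self (u - v)
  have hpow : (E - v) ^ m ≤ 2 ^ |m| * (E - u) ^ m :=
    rpow_le_two_rpow_abs_mul m (by linarith [abs_nonneg (u - v)]) (by linarith) (by linarith)
  rw [norm_smul, norm_smul, ← mul_assoc, norm_of_nonneg (rpow_nonneg (by linarith) m),
    norm_of_nonneg (rpow_nonneg (by linarith) m)]
  exact mul_le_mul_of_nonneg_right hpow (norm_nonneg x)

theorem aestronglyMeasurable_sub_rpow_smul {μ : Measure ℝ} (hφ : AEStronglyMeasurable φ μ)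
    (u m : ℝ) : AEStronglyMeasurable (fun E => (E - u) ^ m • φ E) μ :=
  (by fun_prop : Measurable fun E : ℝ => (E - u) ^ m).aestronglyMeasurable.smul hφ

theorem integrableOn_Ioi_sub_rpow_smul_of_near
    (hmeas : AEStronglyMeasurable φ (volume.restrict (Ioi c))) (huv : 2 * |u - v| ≤ c - u)
    (hint : IntegrableOn (fun E => (E - u) ^ m • φ E) (Ioi c)) :
    IntegrableOn (fun E => (E - v) ^ m • φ E) (Ioi c) := by
  refine (hint.norm.const_mul (2 ^ |m|)).mono' (aestronglyMeasurable_sub_rpow_smul hmeas v m) ?_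
  filter_upwards [ae_restrict_mem measurableSet_Ioi] with E hE
    using norm_sub_rpow_smul_le m (φ E) huv hE

theorem eventually_two_mul_abs_sub_le (hu₀ : u₀ < c) :
    ∀ᶠ u in 𝓝 u₀, 2 * |u₀ - u| ≤ c - u₀ ∧ 2 * |u - u₀| ≤ c - u := by
  have hleft : ∀ᶠ u in 𝓝 u₀, 2 * |u₀ - u| < c - u₀ :=
    ContinuousAt.eventually_lt (by fun_prop) continuousAt_const (by simpa using hu₀)
  have hright : ∀ᶠ u in 𝓝 u₀, 2 * |u - u₀| < c - u :=
    ContinuousAt.eventually_lt (by fun_prop) (by fun_prop) (by simpa using hu₀)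
  exact (hleft.and hright).mono fun u hu => ⟨hu.1.le, hu.2.le⟩

theorem continuousAt_setIntegral_Ioi_sub_rpow_smul
    (hmeas : AEStronglyMeasurable φ (volume.restrict (Ioi c))) (hu₀ : u₀ < c)
    (hint : IntegrableOn (fun E => (E - u₀) ^ m • φ E) (Ioi c)) :
    ContinuousAt (fun u => ∫ E in Ioi c, (E - u) ^ m • φ E) u₀ := by
  refine tendsto_integral_filter_of_dominated_convergence _
    (Eventually.of_forall fun u => aestronglyMeasurable_sub_rpow_smul hmeas u m) ?_
    (hint.norm.const_mul (2 ^ |m|)) ?_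
  · filter_upwards [eventually_two_mul_abs_sub_le hu₀] with u hu
    filter_upwards [ae_restrict_mem measurableSet_Ioi] with E hE
      using norm_sub_rpow_smul_le m (φ E) hu.1 hE
  · filter_upwards [ae_restrict_mem measurableSet_Ioi] with E hE
    have hne : E - u₀ ≠ 0 := (sub_pos.2 (hu₀.trans hE)).ne'
    exact ((tendsto_const_nhds.sub tendsto_id).rpow_const (.inl hne)).smul_const _

/-- The integral may diverge at infinity. It then diverges for all nearby lower limits, so that the
Bochner integral vanishes identically near `u₀`. Since `0 ^ (0 : ℝ) = 1`, this can happen for `φ`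
bounded by a multiple of `max (E₀ - E) 0 ^ k` with `k = 0`. -/
theorem continuousAt_integral_Ioi_sub_rpow_smul [CompleteSpace F] (hpq : p.HolderConjugate q)
    (hφ : MemLp φ (ENNReal.ofReal p) (volume.restrict (Ioc a c)))
    (hmeas : AEStronglyMeasurable φ (volume.restrict (Ioi c))) (hm : -1 < m * q) (hau₀ : a < u₀)
    (hu₀c : u₀ < c) : ContinuousAt (fun u => ∫ E in Ioi u, (E - u) ^ m • φ E) u₀ := by
  by_cases hint : IntegrableOn (fun E => (E - u₀) ^ m • φ E) (Ioi c)
  · have hnear := (continuousOn_setIntegral_Ioc_sub_rpow_smul hpq hφ hm).continuousAt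
      (Ici_mem_nhds hau₀)
    have hfar := continuousAt_setIntegral_Ioi_sub_rpow_smul hmeas hu₀c hint
    refine (hnear.add hfar).congr ?_
    filter_upwards [Ioo_mem_nhds hau₀ hu₀c, eventually_two_mul_abs_sub_le hu₀c] with u hu hclose
    rw [Pi.add_apply, ← Ioc_union_Ioi_eq_Ioi hu.2.le, setIntegral_union (Ioc_disjoint_Ioi le_rfl)
      measurableSet_Ioi (integrableOn_Ioc_sub_rpow_smul hpq hφ hm hu.1.le)
      (integrableOn_Ioi_sub_rpow_smul_of_near hmeas hclose.1 hint)]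
  · refine (continuousAt_const (y := (0 : F))).congr ?_
    filter_upwards [Iio_mem_nhds hu₀c, eventually_two_mul_abs_sub_le hu₀c] with u huc hclose
    refine (integral_undef fun hu => hint ?_).symm
    exact integrableOn_Ioi_sub_rpow_smul_of_near hmeas hclose.2
      (IntegrableOn.mono_set hu (Ioi_subset_Ioi huc.le))

end PowerKernel

theorem gm_continuous_general {F : Type*} [NormedAddCommGroup F] [NormedSpace ℝ F]
    [CompleteSpace F] (Emin : EReal) (φ : ℝ → F)
    (hmeas : AEStronglyMeasurable φ (volume.restrict {E : ℝ | Emin < (E : EReal)}))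
    (E₀ k : ℝ) (hk : -1 < k)
    (hbound : ∀ K : Set ℝ, IsCompact K → K ⊆ {E : ℝ | Emin < (E : EReal)} →
      ∃ C : ℝ, ∀ E ∈ K, ‖φ E‖ ≤ C * max (E₀ - E) 0 ^ k)
    (m : ℝ) (hm : -1 < m) (hkm : 0 < k + m + 1) :
    ContinuousOn (fun u : ℝ => ∫ E in Ioi u, (E - u) ^ m • φ E)
      {u : ℝ | Emin < (u : EReal)} := by
  intro u₀ hu₀
  obtain ⟨p, q, hpq, hkp, hmq⟩ := exists_holderConjugate_neg_one_lt_mul hk hm hkm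
  obtain ⟨a, hEa, hau₀⟩ := EReal.lt_iff_exists_real_btwn.1 hu₀
  rw [EReal.coe_lt_coe_iff] at hau₀
  have hIci : Ici a ⊆ {E : ℝ | Emin < (E : EReal)} := fun E hE =>
    hEa.trans_le (EReal.coe_le_coe_iff.2 hE)
  have hIoc : Ioc a (u₀ + 1) ⊆ Icc a (u₀ + 1) := Ioc_subset_Icc_self
  obtain ⟨C, hC⟩ := hbound (Icc a (u₀ + 1)) isCompact_Icc (Icc_subset_Ici_self.trans hIci)
  have hφ : MemLp φ (ENNReal.ofReal p) (volume.restrict (Ioc a (u₀ + 1))) := by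
    refine ((memLp_max_sub_zero_rpow hpq.pos hkp a (u₀ + 1) E₀).const_mul C).mono'
      (hmeas.mono_set (hIoc.trans (Icc_subset_Ici_self.trans hIci))) ?_
    filter_upwards [ae_restrict_mem measurableSet_Ioc] with E hE using hC E (hIoc hE)
  have htail : Ioi (u₀ + 1) ⊆ Ici a := Ioi_subset_Ici (by linarith)
  exact (continuousAt_integral_Ioi_sub_rpow_smul hpq hφ (hmeas.mono_set (htail.trans hIci)) hmq
    hau₀ (lt_add_one u₀)).continuousWithinAt

theorem gm_continuous
    (Emin : EReal) (hEmin : Emin = ⊥ ∨ Emin = 0)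
    (φ : ℝ → ℝ) (hmeas : Measurable φ)
    (E₀ : ℝ) (hE₀ : Emin < (E₀ : EReal)) (k : ℝ) (hk : -1 < k)
    (hbound : ∀ K : Set ℝ, IsCompact K → K ⊆ {E : ℝ | Emin < (E : EReal)} →
      ∃ C : ℝ, 0 ≤ C ∧ ∀ E ∈ K, 0 ≤ φ E ∧ φ E ≤ C * (max (E₀ - E) 0) ^ k)
    (m : ℝ) (hm : -1 < m) (hkm : 0 < k + m + 1) :
    ContinuousOn (fun u : ℝ => ∫ E in Ioi u, φ E * (E - u) ^ m)
      {u : ℝ | Emin < (u : EReal)} := by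
  simpa only [smul_eq_mul, mul_comm] using
    gm_continuous_general Emin φ hmeas.aestronglyMeasurable E₀ k hk (fun K hK hKE =>
      (hbound K hK hKE).imp fun C hC E hE =>
        (norm_of_nonneg (hC.2 E hE).1).trans_le (hC.2 E hE).2) m hm hkm
end

section
/- Let l > −1, let φ : ℝ → [0,∞] be measurable, let x ∈ ℝ³ with |x| = r > 0, and let u ∈ ℝ. Then, as an identity in [0,∞], ∫_{ℝ³} φ(½|v|² + u) |x × v|^{2l} dv = 2^{l+3/2} π c_{l,−1/2} r^{2l} ∫_u^∞ φ(E)(E − u)^{l+1/2} dE, where c_{l,−1/2} = ∫₀¹ s^l (1−s)^{−1/2} ds. -/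
open MeasureTheory Real Set
open scoped ENNReal

/-- The cross product of two vectors in `ℝ³`. -/
noncomputable def cross3 (x v : Fin 3 → ℝ) : Fin 3 → ℝ :=
  ![x 1 * v 2 - x 2 * v 1, x 2 * v 0 - x 0 * v 2, x 0 * v 1 - x 1 * v 0]

/-- The Euclidean norm on `ℝ³`. -/
noncomputable def norm3 (w : Fin 3 → ℝ) : ℝ :=
  Real.sqrt (w 0 ^ 2 + w 1 ^ 2 + w 2 ^ 2)

/-!
Split `v` into its projections on the line `ℝ x` and on the orthogonal plane. Then `|x × v|` is
`|x|` times the norm of the planar part, and `|v|²` is the sum of the two squared norms. On a space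
of dimension `d` the squared norm pushes Lebesgue measure forward to a multiple of
`w ^ (d / 2 - 1) dw` on `(0, ∞)`. The factor `|x × v| ^ (2 l)` raises the exponent of the planar
part by `l`, and the convolution of two power densities is again one, up to a Beta integral. What
is left is an integral over `t = |v|²`, in which one substitutes `E = t / 2 + u`.
-/

lemma lintegral_eq_lintegral_comp_mul_left (f : ℝ → ℝ≥0∞) {c : ℝ} (hc : c ≠ 0) :
    ∫⁻ y, f y = ENNReal.ofReal |c| * ∫⁻ t, f (c * t) := by
  conv_lhs => rw [← Real.smul_map_volume_mul_left hc]
  rw [lintegral_smul_measure, smul_eq_mul, (measurableEmbedding_mulLeft₀ hc).lintegral_map]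

lemma lintegral_Ioi_comp_sq (g : ℝ → ℝ≥0∞) :
    ∫⁻ z in Ioi (0 : ℝ), ENNReal.ofReal (2 * z) * g (z ^ 2) = ∫⁻ y in Ioi (0 : ℝ), g y := by
  have himage : (fun z : ℝ => z ^ 2) '' Ioi 0 = Ioi 0 := by
    ext y
    exact ⟨fun ⟨_, hz, hzy⟩ => hzy ▸ pow_pos (mem_Ioi.1 hz) 2,
      fun hy => ⟨√y, Real.sqrt_pos.2 hy, Real.sq_sqrt (le_of_lt hy)⟩⟩
  have hsubst := lintegral_image_eq_lintegral_deriv_mul_of_monotoneOn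
    (s := Ioi (0 : ℝ)) (f := fun z => z ^ 2) (f' := fun z => 2 * z) measurableSet_Ioi
    (fun z _ => by simpa using (hasDerivAt_pow 2 z).hasDerivWithinAt)
    (fun z hz w _ h => pow_le_pow_left₀ (le_of_lt hz) h 2) g
  rw [← hsubst, himage]

/-- The density `w ^ a` on the half-line `(0, ∞)`, extended by zero, so that convolution and
substitution take place on all of `ℝ`. -/
noncomputable def powerDensity (a : ℝ) : ℝ → ℝ≥0∞ :=
  (Ioi 0).indicator fun w => ENNReal.ofReal (w ^ a)

/-- The measure `w ^ a dw` on the half-line `(0, ∞)`, as a measure on `ℝ`. -/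
noncomputable def powerMeasure (a : ℝ) : Measure ℝ :=
  volume.withDensity (powerDensity a)

instance (a : ℝ) : SFinite (powerMeasure a) := by
  unfold powerMeasure
  infer_instance

/-- The Euler Beta integral `∫₀¹ s ^ a (1 - s) ^ b ds = B(a + 1, b + 1)`, with value `∞` where it
diverges. The exponents are not shifted by one, so this is the `c_{a,b}` of the density identity. -/
noncomputable def lbeta (a b : ℝ) : ℝ≥0∞ :=
  ∫⁻ s in Ioo (0 : ℝ) 1, ENNReal.ofReal (s ^ a * (1 - s) ^ b)

/-- Half the surface area of the unit sphere of `ℝᵈ`: the factor by which the image of Lebesgue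
measure under `‖·‖ ^ 2` differs from `powerMeasure (d / 2 - 1)`. -/
noncomputable def halfSphereArea (d : ℕ) : ℝ :=
  π ^ (d / 2 : ℝ) / Gamma (d / 2)

lemma powerDensity_of_pos {a w : ℝ} (hw : 0 < w) :
    powerDensity a w = ENNReal.ofReal (w ^ a) :=
  indicator_of_mem (mem_Ioi.2 hw) _

lemma powerDensity_of_nonpos {a w : ℝ} (hw : w ≤ 0) : powerDensity a w = 0 :=
  indicator_of_notMem (notMem_Ioi.2 hw) _

@[fun_prop]
lemma measurable_powerDensity (a : ℝ) : Measurable (powerDensity a) :=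
  Measurable.indicator (by fun_prop) measurableSet_Ioi

lemma powerDensity_mul (a : ℝ) {c : ℝ} (hc : 0 < c) (t : ℝ) :
    powerDensity a (c * t) = ENNReal.ofReal (c ^ a) * powerDensity a t := by
  rcases le_or_gt t 0 with ht | ht
  · rw [powerDensity_of_nonpos ht, powerDensity_of_nonpos (mul_nonpos_of_nonneg_of_nonpos hc.le ht),
      mul_zero]
  · rw [powerDensity_of_pos ht, powerDensity_of_pos (mul_pos hc ht), mul_rpow hc.le ht.le,
      ENNReal.ofReal_mul (rpow_nonneg hc.le a)]

lemma lintegral_powerMeasure (a : ℝ) {f : ℝ → ℝ≥0∞} (hf : Measurable f) :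
    ∫⁻ w, f w ∂powerMeasure a = ∫⁻ w in Ioi 0, ENNReal.ofReal (w ^ a) * f w := by
  rw [powerMeasure, powerDensity, withDensity_indicator measurableSet_Ioi,
    lintegral_withDensity_eq_lintegral_mul _ (by fun_prop) hf]
  rfl

lemma withDensity_rpow_powerMeasure (a l : ℝ) :
    (powerMeasure a).withDensity (fun w => ENNReal.ofReal (w ^ l)) = powerMeasure (l + a) := by
  unfold powerMeasure
  rw [← withDensity_mul _ (by fun_prop) (by fun_prop)]
  congr with w
  rcases le_or_gt w 0 with hw | hw
  · simp [powerDensity_of_nonpos hw]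
  · rw [Pi.mul_apply, powerDensity_of_pos hw, powerDensity_of_pos hw,
      ← ENNReal.ofReal_mul (rpow_nonneg hw.le a), ← rpow_add hw, add_comm]

lemma lbeta_eq_lconvolution (a b : ℝ) : lbeta a b = (powerDensity a ⋆ₗ powerDensity b) 1 := by
  rw [lbeta, lconvolution_def, ← lintegral_indicator measurableSet_Ioo]
  refine lintegral_congr fun s => ?_
  rcases le_or_gt s 0 with hs0 | hs0
  · simp [powerDensity_of_nonpos hs0, hs0.not_gt]
  rcases le_or_gt 1 s with hs1 | hs1
  · simp [powerDensity_of_nonpos (neg_add_nonpos_iff.2 hs1), hs1.not_gt]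
  · rw [indicator_of_mem (mem_Ioo.2 ⟨hs0, hs1⟩), powerDensity_of_pos hs0,
      powerDensity_of_pos (lt_neg_add_iff_lt.2 hs1), ENNReal.ofReal_mul (rpow_nonneg hs0.le a),
      neg_add_eq_sub]

lemma powerDensity_lconvolution (a b : ℝ) :
    powerDensity a ⋆ₗ powerDensity b = lbeta a b • powerDensity (a + b + 1) := by
  ext t
  rw [Pi.smul_apply, smul_eq_mul]
  rcases le_or_gt t 0 with ht | ht
  · rw [powerDensity_of_nonpos ht, mul_zero, lconvolution_def]
    refine lintegral_eq_zero_of_ae_eq_zero (.of_forall fun w => ?_)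
    rcases le_or_gt w 0 with hw | hw
    · simp [powerDensity_of_nonpos hw]
    · simp [powerDensity_of_nonpos (show -w + t ≤ 0 by linarith)]
  have hscale (s : ℝ) : powerDensity a (t * s) * powerDensity b (-(t * s) + t) =
      ENNReal.ofReal (t ^ a) * ENNReal.ofReal (t ^ b) *
        (powerDensity a s * powerDensity b (-s + 1)) := by
    rw [show -(t * s) + t = t * (-s + 1) by ring, powerDensity_mul a ht, powerDensity_mul b ht]
    ring
  rw [lbeta_eq_lconvolution, lconvolution_def, lconvolution_def,
    lintegral_eq_lintegral_comp_mul_left _ ht.ne', abs_of_pos ht, lintegral_congr hscale,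
    lintegral_const_mul _ (by fun_prop), powerDensity_of_pos ht, rpow_add_one ht.ne', rpow_add ht,
    ENNReal.ofReal_mul (by positivity), ENNReal.ofReal_mul (by positivity)]
  ring

lemma powerMeasure_conv (a b : ℝ) :
    powerMeasure a ∗ powerMeasure b = lbeta a b • powerMeasure (a + b + 1) := by
  unfold powerMeasure
  rw [conv_withDensity_eq_lconvolution (by fun_prop) (by fun_prop), powerDensity_lconvolution,
    withDensity_smul _ (by fun_prop)]

lemma intervalIntegrable_rpow_mul_one_sub_rpow {a b : ℝ} (ha : -1 < a) (hb : -1 < b) :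
    IntervalIntegrable (fun s : ℝ => s ^ a * (1 - s) ^ b) volume 0 1 := by
  have hcomplex := Complex.betaIntegral_convergent (u := a + 1) (v := b + 1)
    (by norm_cast; linarith) (by norm_cast; linarith)
  rw [intervalIntegrable_iff_integrableOn_Ioo_of_le zero_le_one] at hcomplex ⊢
  refine (integrableOn_congr_fun (fun s hs => ?_) measurableSet_Ioo).1 hcomplex.re
  simp only [add_sub_cancel_right]
  rw [← Complex.ofReal_one, ← Complex.ofReal_sub, ← Complex.ofReal_cpow hs.1.le,
    ← Complex.ofReal_cpow (sub_nonneg.2 hs.2.le), ← Complex.ofReal_mul]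
  exact Complex.ofReal_re _

lemma lbeta_eq_ofReal_integral {a b : ℝ} (ha : -1 < a) (hb : -1 < b) :
    lbeta a b = ENNReal.ofReal (∫ s in (0 : ℝ)..1, s ^ a * (1 - s) ^ b) := by
  have hint := intervalIntegrable_rpow_mul_one_sub_rpow ha hb
  rw [intervalIntegrable_iff_integrableOn_Ioo_of_le zero_le_one] at hint
  rw [lbeta, intervalIntegral.integral_of_le zero_le_one, integral_Ioc_eq_integral_Ioo,
    ofReal_integral_eq_lintegral_ofReal hint]
  filter_upwards [ae_restrict_mem measurableSet_Ioo] with s hs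
  exact mul_nonneg (rpow_nonneg hs.1.le _) (rpow_nonneg (sub_nonneg.2 hs.2.le) _)

lemma lintegral_powerMeasure_comp_div_add {φ : ℝ → ℝ≥0∞} (hφ : Measurable φ) (a : ℝ) {c : ℝ}
    (hc : 0 < c) (u : ℝ) :
    ∫⁻ t, φ (t / c + u) ∂powerMeasure a =
      ENNReal.ofReal (c ^ (a + 1)) * ∫⁻ y in Ioi u, φ y * ENNReal.ofReal ((y - u) ^ a) := by
  have hdensity : ∫⁻ y in Ioi u, φ y * ENNReal.ofReal ((y - u) ^ a) =
      ∫⁻ y, powerDensity a (y - u) * φ y := by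
    rw [← lintegral_indicator measurableSet_Ioi]
    refine lintegral_congr fun y => ?_
    rcases le_or_gt y u with hy | hy
    · simp [powerDensity_of_nonpos (sub_nonpos.2 hy), hy.not_gt]
    · rw [indicator_of_mem (mem_Ioi.2 hy), powerDensity_of_pos (sub_pos.2 hy), mul_comm]
  have hscale (t : ℝ) : powerDensity a (c * t) * φ (c * t / c + u) =
      ENNReal.ofReal (c ^ a) * (powerDensity a (t + u - u) * φ (t + u)) := by
    rw [powerDensity_mul a hc, mul_div_cancel_left₀ t hc.ne', add_sub_cancel_right, mul_assoc]
  calc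
    _ = ∫⁻ t, powerDensity a t * φ (t / c + u) :=
      lintegral_withDensity_eq_lintegral_mul _ (by fun_prop) (by fun_prop)
    _ = ENNReal.ofReal c *
        (ENNReal.ofReal (c ^ a) * ∫⁻ t, powerDensity a (t + u - u) * φ (t + u)) := by
      rw [lintegral_eq_lintegral_comp_mul_left _ hc.ne', abs_of_pos hc, lintegral_congr hscale,
        lintegral_const_mul _ (by fun_prop)]
    _ = _ := by
      rw [lintegral_add_right_eq_self (fun y => powerDensity a (y - u) * φ y) u, hdensity,
        ← mul_assoc, ← ENNReal.ofReal_mul hc.le, rpow_add_one hc.ne', mul_comm c]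

lemma halfSphereArea_one : halfSphereArea 1 = 1 := by
  rw [halfSphereArea, Nat.cast_one, Gamma_one_half_eq, sqrt_eq_rpow, div_self (by positivity)]

lemma halfSphereArea_two : halfSphereArea 2 = π := by
  simp [halfSphereArea]

lemma halfSphereArea_nonneg (d : ℕ) : 0 ≤ halfSphereArea d :=
  div_nonneg (by positivity) (Gamma_nonneg_of_nonneg (by positivity))

section Radial

open Module

lemma lintegral_fun_norm_addHaar {E : Type*} [NormedAddCommGroup E] [NormedSpace ℝ E]
    [FiniteDimensional ℝ E] [Nontrivial E] [MeasurableSpace E] [BorelSpace E] (μ : Measure E)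
    [μ.IsAddHaarMeasure] {f : ℝ → ℝ≥0∞} (hf : Measurable f) :
    ∫⁻ x, f ‖x‖ ∂μ = finrank ℝ E * μ (Metric.ball 0 1) *
      ∫⁻ ρ in Ioi (0 : ℝ), ENNReal.ofReal (ρ ^ (finrank ℝ E - 1)) * f ρ :=
  calc
    ∫⁻ x, f ‖x‖ ∂μ = ∫⁻ x : ({0}ᶜ : Set E), f ‖(x : E)‖ ∂μ.comap (↑) := by
      rw [lintegral_subtype_comap (measurableSet_singleton _).compl fun x => f ‖x‖,
        restrict_compl_singleton]
    _ = ∫⁻ p, f p.2 ∂μ.toSphere.prod (.volumeIoiPow (finrank ℝ E - 1)) := by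
      simpa using μ.measurePreserving_homeomorphUnitSphereProd.lintegral_comp
        (f := fun p => f p.2) (by fun_prop)
    _ = finrank ℝ E * μ (Metric.ball 0 1) *
        ∫⁻ ρ : Ioi (0 : ℝ), f ρ ∂.volumeIoiPow (finrank ℝ E - 1) := by
      rw [lintegral_prod _ (by fun_prop)]
      simp only [lintegral_const]
      rw [μ.toSphere_apply_univ, mul_comm]
    _ = _ := by
      rw [Measure.volumeIoiPow, lintegral_withDensity_eq_lintegral_mul _ (by fun_prop)
        (by fun_prop), ← lintegral_subtype_comap measurableSet_Ioi]
      rfl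

variable {E : Type*} [NormedAddCommGroup E] [InnerProductSpace ℝ E] [FiniteDimensional ℝ E]
  [MeasurableSpace E] [BorelSpace E]

variable (E) in
lemma finrank_mul_volume_ball_one [Nontrivial E] :
    finrank ℝ E * volume (Metric.ball (0 : E) 1) =
      ENNReal.ofReal (halfSphereArea (finrank ℝ E)) * 2 := by
  have hd : (finrank ℝ E : ℝ) ≠ 0 := Nat.cast_ne_zero.2 finrank_pos.ne'
  rw [InnerProductSpace.volume_ball, halfSphereArea, Gamma_add_one (by positivity), sqrt_eq_rpow,
    ← rpow_mul_natCast pi_pos.le, ENNReal.ofReal_one, one_pow, one_mul, ← ENNReal.ofReal_natCast,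
    ← ENNReal.ofReal_mul (by positivity), ← ENNReal.ofReal_ofNat 2,
    ← ENNReal.ofReal_mul' zero_le_two]
  congr 1
  field_simp

variable (E) in
lemma map_norm_sq_volume [Nontrivial E] :
    (volume : Measure E).map (‖·‖ ^ 2) =
      ENNReal.ofReal (halfSphereArea (finrank ℝ E)) • powerMeasure (finrank ℝ E / 2 - 1) := by
  refine Measure.ext_of_lintegral _ fun f hf => ?_
  have hpow : ∀ ρ ∈ Ioi (0 : ℝ), 2 * (ENNReal.ofReal (ρ ^ (finrank ℝ E - 1)) * f (ρ ^ 2)) =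
      ENNReal.ofReal (2 * ρ) *
        (ENNReal.ofReal ((ρ ^ 2) ^ (finrank ℝ E / 2 - 1 : ℝ)) * f (ρ ^ 2)) := by
    intro ρ (hρ : 0 < ρ)
    have hexp : ρ * (ρ ^ 2) ^ (finrank ℝ E / 2 - 1 : ℝ) = ρ ^ (finrank ℝ E - 1) := by
      rw [← rpow_natCast ρ 2, ← rpow_mul hρ.le, mul_comm, ← rpow_add_one hρ.ne', ← rpow_natCast,
        Nat.cast_pred finrank_pos]
      congr 1
      push_cast
      ring
    rw [← hexp, ENNReal.ofReal_mul zero_le_two, ENNReal.ofReal_mul hρ.le, ENNReal.ofReal_ofNat]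
    ring
  rw [lintegral_map hf (by fun_prop), lintegral_smul_measure, smul_eq_mul,
    lintegral_powerMeasure _ hf, ← lintegral_Ioi_comp_sq,
    ← setLIntegral_congr_fun measurableSet_Ioi hpow, lintegral_const_mul _ (by fun_prop),
    ← mul_assoc, ← finrank_mul_volume_ball_one]
  exact lintegral_fun_norm_addHaar volume (f := fun ρ => f (ρ ^ 2)) (by fun_prop)

lemma map_norm_sq_projections_volume (K : Submodule ℝ E) [Nontrivial K] [Nontrivial Kᗮ] :
    (volume : Measure E).map (fun v => (‖Kᗮ.starProjection v‖ ^ 2, ‖K.starProjection v‖ ^ 2)) =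
      (ENNReal.ofReal (halfSphereArea (finrank ℝ Kᗮ)) • powerMeasure (finrank ℝ Kᗮ / 2 - 1)).prod
        (ENNReal.ofReal (halfSphereArea (finrank ℝ K)) • powerMeasure (finrank ℝ K / 2 - 1)) := by
  have hsplit := (WithLp.volume_preserving_ofLp K Kᗮ).comp
    K.orthogonalDecomposition.measurePreserving
  rw [← map_norm_sq_volume, ← map_norm_sq_volume, Measure.map_prod_map _ _ (by fun_prop)
    (by fun_prop), ← Measure.prod_swap, Measure.map_map (by fun_prop) (by fun_prop),
    ← Measure.volume_eq_prod, ← hsplit.map_eq, Measure.map_map (by fun_prop) (by fun_prop)]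
  congr with v <;> simp

/-- `‖v‖ ^ 2` is the sum of the squared norms of the projections of `v`, so its law is the
convolution of theirs. -/
theorem lintegral_comp_norm_sq_mul_norm_starProjection_rpow (K : Submodule ℝ E) [Nontrivial K]
    [Nontrivial Kᗮ] {f : ℝ → ℝ≥0∞} (hf : Measurable f) (l : ℝ) :
    ∫⁻ v : E, f (‖v‖ ^ 2) * ENNReal.ofReal (‖Kᗮ.starProjection v‖ ^ (2 * l)) =
      ENNReal.ofReal (halfSphereArea (finrank ℝ K) * halfSphereArea (finrank ℝ Kᗮ)) *
        lbeta (l + (finrank ℝ Kᗮ / 2 - 1)) (finrank ℝ K / 2 - 1) *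
          ∫⁻ t, f t ∂powerMeasure (l + finrank ℝ E / 2 - 1) := by
  set k := (finrank ℝ K : ℝ)
  set m := (finrank ℝ Kᗮ : ℝ)
  have hdim : l + (m / 2 - 1) + (k / 2 - 1) + 1 = l + finrank ℝ E / 2 - 1 := by
    rw [← K.finrank_add_finrank_orthogonal, Nat.cast_add]
    ring
  have hpyth (v : E) : f (‖v‖ ^ 2) * ENNReal.ofReal (‖Kᗮ.starProjection v‖ ^ (2 * l)) =
      ENNReal.ofReal ((‖Kᗮ.starProjection v‖ ^ 2) ^ l) *
        f (‖Kᗮ.starProjection v‖ ^ 2 + ‖K.starProjection v‖ ^ 2) := by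
    rw [Submodule.norm_sq_eq_add_norm_sq_starProjection v K, rpow_mul (norm_nonneg _), rpow_two,
      mul_comm, add_comm]
  calc
    _ = ∫⁻ p, ENNReal.ofReal (p.1 ^ l) * f (p.1 + p.2) ∂(volume : Measure E).map
          fun v => (‖Kᗮ.starProjection v‖ ^ 2, ‖K.starProjection v‖ ^ 2) := by
      rw [lintegral_congr hpyth, lintegral_map (by fun_prop) (by fun_prop)]
    _ = ENNReal.ofReal (halfSphereArea (finrank ℝ Kᗮ)) *
          (ENNReal.ofReal (halfSphereArea (finrank ℝ K)) *
            ∫⁻ w, ∫⁻ y, ENNReal.ofReal (w ^ l) * f (w + y)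
              ∂powerMeasure (k / 2 - 1) ∂powerMeasure (m / 2 - 1)) := by
      rw [map_norm_sq_projections_volume, lintegral_prod _ (by fun_prop)]
      simp only [lintegral_smul_measure, smul_eq_mul]
      rw [lintegral_const_mul _ (by fun_prop)]
    _ = ENNReal.ofReal (halfSphereArea (finrank ℝ Kᗮ)) *
          (ENNReal.ofReal (halfSphereArea (finrank ℝ K)) *
            ∫⁻ t, f t ∂(powerMeasure (l + (m / 2 - 1)) ∗ powerMeasure (k / 2 - 1))) := by
      rw [Measure.lintegral_conv hf, ← withDensity_rpow_powerMeasure,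
        lintegral_withDensity_eq_lintegral_mul _ (by fun_prop) (by fun_prop)]
      simp only [Pi.mul_apply]
      congr with w
      rw [lintegral_const_mul _ (by fun_prop)]
    _ = _ := by
      rw [powerMeasure_conv, hdim, lintegral_smul_measure, smul_eq_mul,
        ENNReal.ofReal_mul (halfSphereArea_nonneg _)]
      ring

end Radial

section InnerProductSpace

variable {E : Type*} [NormedAddCommGroup E] [InnerProductSpace ℝ E]

lemma norm_sq_mul_norm_sq_starProjection_orthogonal_span_singleton (x v : E) :
    ‖x‖ ^ 2 * ‖(ℝ ∙ x)ᗮ.starProjection v‖ ^ 2 = ‖x‖ ^ 2 * ‖v‖ ^ 2 - inner ℝ x v ^ 2 := by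
  have hproj : ‖x‖ ^ 2 * ‖(ℝ ∙ x).starProjection v‖ ^ 2 = inner ℝ x v ^ 2 := by
    rcases eq_or_ne x 0 with rfl | hx
    · simp
    rw [Submodule.starProjection_singleton, norm_smul, mul_pow, norm_eq_abs, sq_abs]
    field_simp
    simp only [RCLike.ofReal_real_eq_id, id_eq]
    ring
  rw [Submodule.norm_sq_eq_add_norm_sq_starProjection v (ℝ ∙ x), mul_add, hproj]
  ring

end InnerProductSpace

lemma norm3_nonneg (w : Fin 3 → ℝ) : 0 ≤ norm3 w :=
  sqrt_nonneg _

lemma norm3_eq_norm_toLp (v : Fin 3 → ℝ) : norm3 v = ‖WithLp.toLp 2 v‖ := by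
  simp [norm3, EuclideanSpace.norm_eq, Fin.sum_univ_three]

lemma norm3_cross3_sq (x v : Fin 3 → ℝ) :
    norm3 (cross3 x v) ^ 2 = norm3 x ^ 2 * norm3 v ^ 2 - (x ⬝ᵥ v) ^ 2 := by
  rw [norm3, norm3, norm3, sq_sqrt (by positivity), sq_sqrt (by positivity),
    sq_sqrt (by positivity), Matrix.vec3_dotProduct]
  simp only [cross3, Matrix.cons_val]
  ring

lemma norm3_cross3_eq_norm_starProjection (x v : Fin 3 → ℝ) :
    norm3 (cross3 x v) =
      norm3 x * ‖(ℝ ∙ WithLp.toLp 2 x)ᗮ.starProjection (WithLp.toLp 2 v)‖ := by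
  rw [← sq_eq_sq₀ (norm3_nonneg _) (mul_nonneg (norm3_nonneg _) (norm_nonneg _)), norm3_cross3_sq,
    mul_pow, norm3_eq_norm_toLp, norm3_eq_norm_toLp,
    norm_sq_mul_norm_sq_starProjection_orthogonal_span_singleton,
    EuclideanSpace.inner_toLp_toLp, star_trivial, dotProduct_comm]

theorem density_reduction_nonrelativistic_general
    (l : ℝ) (φ : ℝ → ℝ≥0∞) (hφ : Measurable φ) (x : Fin 3 → ℝ) (hx : 0 < norm3 x) (u : ℝ) :
    ∫⁻ v : Fin 3 → ℝ,
        φ (1 / 2 * norm3 v ^ 2 + u) * ENNReal.ofReal (norm3 (cross3 x v) ^ (2 * l)) =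
      ENNReal.ofReal (2 ^ (l + 3 / 2) * π) * lbeta l (-(1 / 2)) *
        ENNReal.ofReal (norm3 x ^ (2 * l)) *
          ∫⁻ E in Ioi u, φ E * ENNReal.ofReal ((E - u) ^ (l + 1 / 2)) := by
  let X : EuclideanSpace ℝ (Fin 3) := WithLp.toLp 2 x
  have hX : X ≠ 0 := norm_pos_iff.1 (norm3_eq_norm_toLp x ▸ hx)
  have : Fact (Module.finrank ℝ (EuclideanSpace ℝ (Fin 3)) = 2 + 1) := ⟨by simp⟩
  have hline : Module.finrank ℝ (ℝ ∙ X) = 1 := finrank_span_singleton hX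
  have hplane : Module.finrank ℝ (ℝ ∙ X)ᗮ = 2 := Submodule.finrank_orthogonal_span_singleton hX
  have : Nontrivial (ℝ ∙ X) := Module.nontrivial_of_finrank_pos (R := ℝ) (by simp [hline])
  have : Nontrivial (ℝ ∙ X)ᗮ := Module.nontrivial_of_finrank_pos (R := ℝ) (by simp [hplane])
  have hintegrand (v : Fin 3 → ℝ) :
      φ (1 / 2 * norm3 v ^ 2 + u) * ENNReal.ofReal (norm3 (cross3 x v) ^ (2 * l)) =
        ENNReal.ofReal (norm3 x ^ (2 * l)) * (φ (‖WithLp.toLp 2 v‖ ^ 2 / 2 + u) *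
          ENNReal.ofReal (‖(ℝ ∙ X)ᗮ.starProjection (WithLp.toLp 2 v)‖ ^ (2 * l))) := by
    rw [norm3_cross3_eq_norm_starProjection, mul_rpow hx.le (norm_nonneg _),
      ENNReal.ofReal_mul (by positivity), norm3_eq_norm_toLp v, one_div_mul_eq_div]
    ring
  rw [lintegral_congr hintegrand, lintegral_const_mul _ (by fun_prop),
    (PiLp.volume_preserving_toLp (Fin 3)).lintegral_comp
      (f := fun V => φ (‖V‖ ^ 2 / 2 + u) *
        ENNReal.ofReal (‖(ℝ ∙ X)ᗮ.starProjection V‖ ^ (2 * l))) (by fun_prop),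
    lintegral_comp_norm_sq_mul_norm_starProjection_rpow (ℝ ∙ X) (f := fun t => φ (t / 2 + u))
      (by fun_prop), lintegral_powerMeasure_comp_div_add hφ _ two_pos, hline, hplane,
    halfSphereArea_one, halfSphereArea_two, finrank_euclideanSpace_fin]
  push_cast
  rw [show l + ((2 : ℝ) / 2 - 1) = l by ring, show (1 : ℝ) / 2 - 1 = -(1 / 2) by ring,
    show l + 3 / 2 - 1 = l + 1 / 2 by ring, show l + 1 / 2 + 1 = l + 3 / 2 by ring, one_mul,
    ENNReal.ofReal_mul (by positivity)]
  ring

theorem density_reduction_nonrelativistic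
    (l : ℝ) (hl : -1 < l) (φ : ℝ → ℝ≥0∞) (hφ : Measurable φ)
    (x : Fin 3 → ℝ) (r : ℝ) (hr : 0 < r) (hx : norm3 x = r) (u : ℝ) :
    (∫⁻ v : Fin 3 → ℝ,
        φ (1 / 2 * norm3 v ^ 2 + u) *
          ENNReal.ofReal (norm3 (cross3 x v) ^ (2 * l))) =
      ENNReal.ofReal (2 ^ (l + 3 / 2) * π *
          (∫ s in (0:ℝ)..1, s ^ l * (1 - s) ^ (-(1/2) : ℝ)) * r ^ (2 * l)) *
        ∫⁻ E in Ioi u, φ E * ENNReal.ofReal ((E - u) ^ (l + 1 / 2)) := by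
  subst hx
  rw [density_reduction_nonrelativistic_general l φ hφ x hr u,
    lbeta_eq_ofReal_integral hl (by norm_num), ENNReal.ofReal_mul' (rpow_nonneg hr.le _),
    ENNReal.ofReal_mul (p := 2 ^ (l + 3 / 2) * π) (by positivity)]
end

section
/- Let φ : ℝ → [0,∞) be measurable with φ(E) = 0 for E ≥ E₀, and on every compact subset of ℝ bounded by C(E₀−E)₊^k for some k > −1. Let l > −1/2 with k + l + 3/2 > 0, and let U₀ ∈ ℝ. Then there exists a unique function U ∈ C¹([0,∞)) with U(0) = U₀ satisfying U'(r) = (2^{l+7/2} π² c_{l,−1/2} / r²) ∫₀^r s^{2l+2} g_{l+1/2}(U(s)) ds for all r > 0, where g_{l+1/2}(u) = ∫_u^{E₀} φ(E)(E − u)^{l+1/2} dE and c_{l,−1/2} = ∫₀¹ s^l(1−s)^{−1/2} ds. -/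
open MeasureTheory Real Set

/-- `U` is a `C¹` solution on `[0,∞)` of the reduced spherically symmetric
Vlasov-Poisson problem with central value `U₀`. -/
def IsReducedVPSolution (E₀ l : ℝ) (φ : ℝ → ℝ) (U₀ : ℝ) (U : ℝ → ℝ) : Prop :=
  U 0 = U₀ ∧ ContDiffOn ℝ 1 U (Set.Ici 0) ∧
    ∀ r ∈ Set.Ioi (0 : ℝ), HasDerivAt U
      ((2 ^ (l + 7 / 2) * Real.pi ^ 2 *
          (∫ s in (0:ℝ)..1, s ^ l * (1 - s) ^ (-(1/2) : ℝ)) / r ^ 2) *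
        ∫ s in (0:ℝ)..r, s ^ (2 * l + 2) *
          ∫ E in (U s)..E₀, φ E * (E - U s) ^ (l + 1 / 2)) r

/-!
With the radius scaled out of the integral over the source, the equation reads
`U = U₀ + P (g ∘ U)`, where `P` is a Volterra operator with a continuous kernel `k` and `g` is the
moment of `φ`. In the weight `exp (lam * ∫ k)` the operator `P` has norm at most `1 / lam`, so for
bounded Lipschitz `g` there is a global solution by contraction.

The moment `g` is Lipschitz below every level `B < E₀` only: if `φ` blows up at `E₀`, it may have
infinite slope there. Two solutions agree until they reach the level `B`, which they therefore do
simultaneously, and being nondecreasing they stay above it from then on. Since `g` decreases to `0`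
at `E₀`, their sources differ by at most `g B` everywhere. Letting `B → E₀` gives uniqueness.
Applied to the solutions for the truncations `u ↦ g (min u B)`, the same bound shows that their
sources converge uniformly, to the source of a solution.
-/

open Filter Topology

section FixedPoint

lemma exists_tendstoUniformly_of_dist_le {X E : Type*} [PseudoMetricSpace E] [CompleteSpace E]
    {f : ℕ → X → E} {δ : ℕ → ℝ} (hf : ∀ n m, n ≤ m → ∀ x, dist (f n x) (f m x) ≤ δ n)
    (hδ : Tendsto δ atTop (𝓝 0)) : ∃ F : X → E, TendstoUniformly f F atTop := by
  choose F hF using fun x => cauchySeq_tendsto_of_complete <|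
    cauchySeq_of_le_tendsto_0' δ (fun n m hnm => hf n m hnm x) hδ
  refine ⟨F, Metric.tendstoUniformly_iff.2 fun ε hε => ?_⟩
  filter_upwards [hδ.eventually_lt_const hε] with n hn x
  rw [dist_comm]
  exact (le_of_tendsto (tendsto_const_nhds.dist (hF x))
    ((eventually_ge_atTop n).mono fun m hm => hf n m hm x)).trans_lt hn

/-- The Banach fixed point theorem for the norm `sup ‖f x‖ / w x`. -/
lemma exists_continuous_fixedPoint_of_weighted_contraction {X E : Type*} [TopologicalSpace X]
    [NormedAddCommGroup E] [NormedSpace ℝ E] [CompleteSpace E] {w : X → ℝ} (hw : Continuous w)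
    (hwpos : ∀ x, 0 < w x) {T : (X → E) → X → E} {M : ℝ} {q : NNReal} (hq : q < 1)
    (hcont : ∀ f, Continuous f → Continuous (T f))
    (hbound : ∀ f, Continuous f → ∀ x, ‖T f x‖ ≤ M * w x)
    (hcontr : ∀ f₁ f₂, Continuous f₁ → Continuous f₂ → ∀ d, 0 ≤ d →
      (∀ x, ‖f₁ x - f₂ x‖ ≤ d * w x) → ∀ x, ‖T f₁ x - T f₂ x‖ ≤ q * d * w x) :
    ∃ f, Continuous f ∧ T f = f := by
  let scale (Y : BoundedContinuousFunction X E) (x : X) : E := w x • Y x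
  have hscale (Y) : Continuous (scale Y) := hw.smul Y.continuous
  have hnorm (x : X) (e : E) : ‖(w x)⁻¹ • e‖ = ‖e‖ / w x := by
    rw [norm_smul, norm_inv, Real.norm_of_nonneg (hwpos x).le, inv_mul_eq_div]
  let S (Y : BoundedContinuousFunction X E) : BoundedContinuousFunction X E :=
    .ofNormedAddCommGroup (fun x => (w x)⁻¹ • T (scale Y) x)
      ((hw.inv₀ fun x => (hwpos x).ne').smul (hcont _ (hscale Y))) M fun x => by
        rw [hnorm, div_le_iff₀ (hwpos x)]
        exact hbound _ (hscale Y) x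
  have hS : ContractingWith q S := by
    refine ⟨hq, LipschitzWith.of_dist_le_mul fun Y Z => ?_⟩
    refine (BoundedContinuousFunction.dist_le (by positivity)).2 fun x => ?_
    have hdist : ∀ y, ‖scale Y y - scale Z y‖ ≤ dist Y Z * w y := fun y => by
      rw [← smul_sub, norm_smul, Real.norm_of_nonneg (hwpos y).le, mul_comm, ← dist_eq_norm]
      exact mul_le_mul_of_nonneg_right (BoundedContinuousFunction.dist_coe_le_dist y) (hwpos y).le
    rw [dist_eq_norm]
    simp only [S, BoundedContinuousFunction.coe_ofNormedAddCommGroup]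
    rw [← smul_sub, hnorm, div_le_iff₀ (hwpos x)]
    exact hcontr _ _ (hscale Y) (hscale Z) _ dist_nonneg hdist x
  refine ⟨scale (hS.fixedPoint S), hscale _, funext fun x => ?_⟩
  have hfix : (w x)⁻¹ • T (scale (hS.fixedPoint S)) x = hS.fixedPoint S x :=
    DFunLike.congr_fun hS.fixedPoint_isFixedPt x
  rw [← smul_inv_smul₀ (hwpos x).ne' (T _ x), hfix]

end FixedPoint

/-- The kernels `k` of the radial Volterra operator. They vanish at negative radii, so that the
equations below hold on all of `ℝ` and need no domain restriction. -/
structure IsRadialKernel (k : ℝ → ℝ) : Prop where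
  continuous : Continuous k
  nonneg : ∀ t, 0 ≤ k t
  eq_zero_of_nonpos : ∀ t ≤ 0, k t = 0

/-- The field generated by the radial source `h`, with the radius scaled out of the integral: for
`k t = A * t ^ a` and `β = a + 1` it is `A / t ^ 2 * ∫ s in 0..t, s ^ (a + 1) * h s` at `0 < t`. -/
noncomputable def radialField (k : ℝ → ℝ) (β : ℝ) (h : ℝ → ℝ) (t : ℝ) : ℝ :=
  k t * ∫ σ in (0:ℝ)..1, σ ^ β * h (t * σ)

/-- The potential of `radialField k β h` that vanishes at the origin. -/
noncomputable def radialPotential (k : ℝ → ℝ) (β : ℝ) (h : ℝ → ℝ) (r : ℝ) : ℝ :=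
  ∫ t in (0:ℝ)..r, radialField k β h t

/-- The total kernel up to radius `r`; its exponential is the weight in which the Volterra operator
`radialPotential k β` contracts. -/
noncomputable def kernelMass (k : ℝ → ℝ) (r : ℝ) : ℝ :=
  ∫ t in (0:ℝ)..r, k t

section Kernel

variable {k : ℝ → ℝ}

lemma continuous_max_zero_rpow {p : ℝ} (hp : 0 ≤ p) : Continuous fun t : ℝ => max t 0 ^ p :=
  (Real.continuous_rpow_const hp).comp (continuous_id.max continuous_const)

lemma isRadialKernel_const_mul_rpow {A a : ℝ} (hA : 0 ≤ A) (ha : 0 < a) :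
    IsRadialKernel fun t => A * max t 0 ^ a where
  continuous := continuous_const.mul (continuous_max_zero_rpow ha.le)
  nonneg t := mul_nonneg hA (rpow_nonneg (le_max_right _ _) _)
  eq_zero_of_nonpos t ht := by rw [max_eq_right ht, zero_rpow ha.ne', mul_zero]

lemma hasDerivAt_kernelMass (hk : Continuous k) (r : ℝ) : HasDerivAt (kernelMass k) (k r) r :=
  (hk.integral_hasStrictDerivAt 0 r).hasDerivAt

lemma continuous_kernelMass (hk : Continuous k) : Continuous (kernelMass k) :=
  continuous_iff_continuousAt.2 fun r => (hasDerivAt_kernelMass hk r).continuousAt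

lemma monotone_kernelMass (hk : IsRadialKernel k) : Monotone (kernelMass k) :=
  monotone_of_hasDerivAt_nonneg (hasDerivAt_kernelMass hk.continuous) hk.nonneg

lemma kernelMass_nonneg (hk : IsRadialKernel k) (r : ℝ) : 0 ≤ kernelMass k r := by
  rcases le_total 0 r with hr | hr
  · exact intervalIntegral.integral_nonneg hr fun t _ => hk.nonneg t
  · refine (intervalIntegral.integral_zero_ae (Eventually.of_forall fun t ht => ?_)).ge
    rw [uIoc_of_ge hr] at ht
    exact hk.eq_zero_of_nonpos t ht.2

end Kernel

section Radial

variable {k : ℝ → ℝ} {β : ℝ} {h h₁ h₂ : ℝ → ℝ}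

lemma continuous_rpow_mul_comp_mul_left (hβ : 0 ≤ β) (hh : Continuous h) (t : ℝ) :
    Continuous fun σ : ℝ => σ ^ β * h (t * σ) :=
  (Real.continuous_rpow_const hβ).mul (hh.comp (continuous_const_mul t))

lemma continuous_radialField (hk : Continuous k) (hβ : 0 ≤ β) (hh : Continuous h) :
    Continuous (radialField k β h) := by
  refine hk.mul (intervalIntegral.continuous_parametric_intervalIntegral_of_continuous' ?_ _ _)
  exact ((Real.continuous_rpow_const hβ).comp continuous_snd).mul (hh.comp continuous_mul)

lemma radialField_nonneg (hk : ∀ t, 0 ≤ k t) (hh : ∀ s, 0 ≤ h s) (t : ℝ) :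
    0 ≤ radialField k β h t :=
  mul_nonneg (hk t) <| intervalIntegral.integral_nonneg zero_le_one fun _ hσ =>
    mul_nonneg (rpow_nonneg hσ.1 _) (hh _)

lemma radialField_congr {t : ℝ} (ht : 0 ≤ t) (heq : EqOn h₁ h₂ (Ici 0)) :
    radialField k β h₁ t = radialField k β h₂ t := by
  refine congrArg (k t * ·) (intervalIntegral.integral_congr fun σ hσ => ?_)
  rw [uIcc_of_le zero_le_one] at hσ
  simp only [heq (mul_nonneg ht hσ.1)]

lemma integral_rpow_mul_comp_mul_left (β : ℝ) (h : ℝ → ℝ) {t : ℝ} (ht : 0 < t) :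
    ∫ σ in (0:ℝ)..1, σ ^ β * h (t * σ)
      = (∫ s in (0:ℝ)..t, s ^ β * h s) / t ^ (β + 1) := by
  have hsubst := intervalIntegral.mul_integral_comp_mul_left (a := 0) (b := 1)
    (f := fun s : ℝ => s ^ β * h s) t
  have hscale : ∫ σ in (0:ℝ)..1, (t * σ) ^ β * h (t * σ)
      = t ^ β * ∫ σ in (0:ℝ)..1, σ ^ β * h (t * σ) := by
    rw [← intervalIntegral.integral_const_mul]
    refine intervalIntegral.integral_congr fun σ hσ => ?_
    rw [uIcc_of_le zero_le_one] at hσ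
    simp only [Real.mul_rpow ht.le hσ.1, mul_assoc]
  rw [mul_zero, mul_one, hscale] at hsubst
  rw [← hsubst, rpow_add_one ht.ne', eq_div_iff (by positivity)]
  ring

lemma radialField_const_mul_rpow (A a : ℝ) (h : ℝ → ℝ) {t : ℝ} (ht : 0 < t) :
    radialField (fun t => A * max t 0 ^ a) (a + 1) h t
      = A / t ^ 2 * ∫ s in (0:ℝ)..t, s ^ (a + 1) * h s := by
  rw [radialField, max_eq_left ht.le, integral_rpow_mul_comp_mul_left _ _ ht,
    rpow_add_one ht.ne', rpow_add_one ht.ne']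
  field_simp

lemma abs_radialField_sub_le (hk : ∀ t, 0 ≤ k t) (hβ : 0 ≤ β) (hh₁ : Continuous h₁)
    (hh₂ : Continuous h₂) {t c : ℝ} (ht : 0 ≤ t) (hc : ∀ s ∈ Icc 0 t, |h₁ s - h₂ s| ≤ c) :
    |radialField k β h₁ t - radialField k β h₂ t| ≤ k t * c := by
  rw [radialField, radialField, ← mul_sub, abs_mul, abs_of_nonneg (hk t),
    ← intervalIntegral.integral_sub
      ((continuous_rpow_mul_comp_mul_left hβ hh₁ t).intervalIntegrable _ _)
      ((continuous_rpow_mul_comp_mul_left hβ hh₂ t).intervalIntegrable _ _)]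
  refine mul_le_mul_of_nonneg_left ?_ (hk t)
  suffices ∀ σ ∈ uIoc (0:ℝ) 1, ‖σ ^ β * h₁ (t * σ) - σ ^ β * h₂ (t * σ)‖ ≤ c by
    simpa using intervalIntegral.norm_integral_le_of_norm_le_const this
  intro σ hσ
  rw [uIoc_of_le zero_le_one] at hσ
  rw [← mul_sub, norm_mul, Real.norm_of_nonneg (rpow_nonneg hσ.1.le _)]
  refine (mul_le_of_le_one_left (norm_nonneg _) (rpow_le_one hσ.1.le hσ.2 hβ)).trans ?_
  exact hc _ ⟨mul_nonneg ht hσ.1.le, mul_le_of_le_one_right ht hσ.2⟩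

lemma hasDerivAt_radialPotential (hk : Continuous k) (hβ : 0 ≤ β) (hh : Continuous h) (r : ℝ) :
    HasDerivAt (radialPotential k β h) (radialField k β h r) r :=
  ((continuous_radialField hk hβ hh).integral_hasStrictDerivAt 0 r).hasDerivAt

lemma contDiff_radialPotential (hk : Continuous k) (hβ : 0 ≤ β) (hh : Continuous h) :
    ContDiff ℝ 1 (radialPotential k β h) := by
  refine contDiff_one_iff_deriv.2
    ⟨fun r => (hasDerivAt_radialPotential hk hβ hh r).differentiableAt, ?_⟩
  rw [funext fun r => (hasDerivAt_radialPotential hk hβ hh r).deriv]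
  exact continuous_radialField hk hβ hh

lemma radialPotential_of_nonpos (hk : IsRadialKernel k) (h : ℝ → ℝ) {r : ℝ} (hr : r ≤ 0) :
    radialPotential k β h r = 0 := by
  refine intervalIntegral.integral_zero_ae (Eventually.of_forall fun t ht => ?_)
  rw [uIoc_of_ge hr] at ht
  rw [radialField, hk.eq_zero_of_nonpos t ht.2, zero_mul]

lemma monotone_radialPotential (hk : IsRadialKernel k) (hβ : 0 ≤ β) (hh : Continuous h)
    (hpos : ∀ s, 0 ≤ h s) : Monotone (radialPotential k β h) :=
  monotone_of_hasDerivAt_nonneg (hasDerivAt_radialPotential hk.continuous hβ hh)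
    (radialField_nonneg hk.nonneg hpos)

lemma abs_radialPotential_sub_le (hk : IsRadialKernel k) (hβ : 0 ≤ β) (hh₁ : Continuous h₁)
    (hh₂ : Continuous h₂) {lam d r : ℝ} (hlam : 0 < lam) (hd : 0 ≤ d)
    (hdiff : ∀ s ∈ Icc 0 r, |h₁ s - h₂ s| ≤ d * exp (lam * kernelMass k s)) :
    |radialPotential k β h₁ r - radialPotential k β h₂ r|
      ≤ d / lam * exp (lam * kernelMass k r) := by
  rcases le_total r 0 with hr | hr
  · rw [radialPotential_of_nonpos hk _ hr, radialPotential_of_nonpos hk _ hr, sub_self, abs_zero]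
    positivity
  have hF₁ := continuous_radialField hk.continuous hβ hh₁
  have hF₂ := continuous_radialField hk.continuous hβ hh₂
  have hmass := continuous_kernelMass hk.continuous
  have hmajorant : Continuous fun t => k t * (d * exp (lam * kernelMass k t)) :=
    hk.continuous.mul (by fun_prop)
  have hprimitive (t : ℝ) : HasDerivAt (fun t => d / lam * exp (lam * kernelMass k t))
      (k t * (d * exp (lam * kernelMass k t))) t := by
    refine (((hasDerivAt_kernelMass hk.continuous t).const_mul lam).exp.const_mul
      (d / lam)).congr_deriv ?_
    field_simp
  rw [radialPotential, radialPotential,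
    ← intervalIntegral.integral_sub (hF₁.intervalIntegrable _ _) (hF₂.intervalIntegrable _ _)]
  calc |∫ t in (0:ℝ)..r, (radialField k β h₁ t - radialField k β h₂ t)|
      ≤ ∫ t in (0:ℝ)..r, k t * (d * exp (lam * kernelMass k t)) := by
        rw [← Real.norm_eq_abs]
        refine intervalIntegral.norm_integral_le_of_norm_le hr
          (Eventually.of_forall fun t ht => ?_) (hmajorant.intervalIntegrable _ _)
        refine abs_radialField_sub_le hk.nonneg hβ hh₁ hh₂ ht.1.le fun s hs => ?_
        refine (hdiff s ⟨hs.1, hs.2.trans ht.2⟩).trans ?_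
        gcongr
        exact monotone_kernelMass hk hs.2
    _ = d / lam * exp (lam * kernelMass k r) - d / lam * exp (lam * kernelMass k 0) :=
        intervalIntegral.integral_eq_sub_of_hasDerivAt (fun t _ => hprimitive t)
          (hmajorant.intervalIntegrable _ _)
    _ ≤ d / lam * exp (lam * kernelMass k r) := sub_le_self _ (by positivity)

lemma radialPotential_eq_of_lipschitz (hk : IsRadialKernel k) (hβ : 0 ≤ β) (hh₁ : Continuous h₁)
    (hh₂ : Continuous h₂) {K : NNReal} {r : ℝ}
    (hlip : ∀ s ∈ Icc 0 r,
      |h₁ s - h₂ s| ≤ K * |radialPotential k β h₁ s - radialPotential k β h₂ s|) :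
    radialPotential k β h₁ r = radialPotential k β h₂ r := by
  rcases lt_or_ge r 0 with hr | hr
  · rw [radialPotential_of_nonpos hk _ hr.le, radialPotential_of_nonpos hk _ hr.le]
  set D := fun s => |radialPotential k β h₁ s - radialPotential k β h₂ s|
  set w := fun s => exp ((K + 1 : ℝ) * kernelMass k s)
  have hwpos (s : ℝ) : 0 < w s := exp_pos _
  have hcont : Continuous fun s => D s / w s := by
    have hP₁ := (contDiff_radialPotential hk.continuous hβ hh₁).continuous
    have hP₂ := (contDiff_radialPotential hk.continuous hβ hh₂).continuous
    have hmass := continuous_kernelMass hk.continuous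
    exact (hP₁.sub hP₂).abs.div (by fun_prop) fun s => (hwpos s).ne'
  obtain ⟨s₀, hs₀, hmax⟩ := isCompact_Icc.exists_isMaxOn ⟨r, hr, le_rfl⟩ hcont.continuousOn
  set d := D s₀ / w s₀
  have hd : 0 ≤ d := div_nonneg (abs_nonneg _) (hwpos s₀).le
  have hle (s) (hs : s ∈ Icc 0 r) : D s ≤ d * w s := (div_le_iff₀ (hwpos s)).1 (hmax hs)
  have himprove : d ≤ K * d / (K + 1) := by
    refine (div_le_iff₀ (hwpos s₀)).2 (abs_radialPotential_sub_le hk hβ hh₁ hh₂ (by positivity)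
      (by positivity) fun s hs => ?_)
    have hs' : s ∈ Icc 0 r := ⟨hs.1, hs.2.trans hs₀.2⟩
    rw [mul_assoc]
    exact (hlip s hs').trans (mul_le_mul_of_nonneg_left (hle s hs') K.2)
  have hd₀ : d = 0 := by
    rw [le_div_iff₀ (by positivity)] at himprove
    linarith
  have hDr := hle r ⟨hr, le_rfl⟩
  rw [hd₀, zero_mul] at hDr
  exact sub_eq_zero.1 (abs_nonpos_iff.1 hDr)

lemma tendsto_radialPotential (hk : IsRadialKernel k) (hβ : 0 ≤ β) {f : ℕ → ℝ → ℝ}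
    (hf : ∀ n, Continuous (f n)) (hh : Continuous h) (hlim : TendstoUniformly f h atTop) (r : ℝ) :
    Tendsto (fun n => radialPotential k β (f n) r) atTop (𝓝 (radialPotential k β h r)) := by
  refine Metric.tendsto_nhds.2 fun ε hε => ?_
  set w := fun s => exp (1 * kernelMass k s)
  have hw : 0 < w r := exp_pos _
  filter_upwards [Metric.tendstoUniformly_iff.1 hlim (ε / 2 / w r) (by positivity)] with n hn
  refine (abs_radialPotential_sub_le hk hβ (hf n) hh one_pos (d := ε / 2 / w r) (by positivity)
    fun s _ => ?_).trans_lt ?_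
  · rw [abs_sub_comm]
    exact (hn s).le.trans (le_mul_of_one_le_right (by positivity)
      (one_le_exp (mul_nonneg zero_le_one (kernelMass_nonneg hk s))))
  · rw [div_one, div_mul_cancel₀ _ hw.ne']
    exact half_lt_self hε

end Radial

/-- `U` solves the integrated equation `U = U₀ + P (g ∘ U)` for the radial Volterra operator `P`.
It is imposed on all of `ℝ`, where it forces `U = U₀` at negative radii. -/
structure IsRadialSolution (k : ℝ → ℝ) (β : ℝ) (g : ℝ → ℝ) (U₀ : ℝ) (U : ℝ → ℝ) : Prop where
  continuous : Continuous U
  eq_add_radialPotential : ∀ r, U r = U₀ + radialPotential k β (g ∘ U) r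

namespace IsRadialSolution

variable {k g g₁ g₂ U U₁ U₂ : ℝ → ℝ} {β U₀ : ℝ}

lemma of_source (hk : Continuous k) (hβ : 0 ≤ β) {h : ℝ → ℝ} (hh : Continuous h)
    (heq : ∀ r, h r = g (U₀ + radialPotential k β h r)) :
    IsRadialSolution k β g U₀ fun r => U₀ + radialPotential k β h r where
  continuous := continuous_const.add (contDiff_radialPotential hk hβ hh).continuous
  eq_add_radialPotential r := by
    rw [show (g ∘ fun r => U₀ + radialPotential k β h r) = h from funext fun s => (heq s).symm]

lemma apply_of_nonpos (hk : IsRadialKernel k) (hU : IsRadialSolution k β g U₀ U) {r : ℝ}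
    (hr : r ≤ 0) : U r = U₀ := by
  rw [hU.eq_add_radialPotential, radialPotential_of_nonpos hk _ hr, add_zero]

lemma monotone (hk : IsRadialKernel k) (hβ : 0 ≤ β) (hg : Continuous g) (hpos : ∀ u, 0 ≤ g u)
    (hU : IsRadialSolution k β g U₀ U) : Monotone U := by
  rw [funext hU.eq_add_radialPotential]
  exact (monotone_radialPotential hk hβ (hg.comp hU.continuous) fun s => hpos _).const_add U₀

lemma eq_of_le (hk : IsRadialKernel k) (hβ : 0 ≤ β) (hg₁ : Continuous g₁) (hg₂ : Continuous g₂)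
    (hpos₁ : ∀ u, 0 ≤ g₁ u) (hpos₂ : ∀ u, 0 ≤ g₂ u) {B : ℝ} {K : NNReal}
    (hg : EqOn g₁ g₂ (Iic B)) (hlip : LipschitzOnWith K g₁ (Iic B))
    (hU₁ : IsRadialSolution k β g₁ U₀ U₁) (hU₂ : IsRadialSolution k β g₂ U₀ U₂) {r : ℝ}
    (hr₁ : U₁ r ≤ B) (hr₂ : U₂ r ≤ B) : U₁ r = U₂ r := by
  rw [hU₁.eq_add_radialPotential, hU₂.eq_add_radialPotential]
  congr 1
  refine radialPotential_eq_of_lipschitz hk hβ (hg₁.comp hU₁.continuous)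
    (hg₂.comp hU₂.continuous) (K := K) fun s hs => ?_
  have hs₁ : U₁ s ≤ B := (hU₁.monotone hk hβ hg₁ hpos₁ hs.2).trans hr₁
  have hs₂ : U₂ s ≤ B := (hU₂.monotone hk hβ hg₂ hpos₂ hs.2).trans hr₂
  have hdist : |g₁ (U₁ s) - g₁ (U₂ s)| ≤ K * |U₁ s - U₂ s| := hlip.dist_le_mul _ hs₁ _ hs₂
  rw [hU₁.eq_add_radialPotential s, hU₂.eq_add_radialPotential s, add_sub_add_left_eq_sub,
    ← hU₁.eq_add_radialPotential s, ← hU₂.eq_add_radialPotential s, hg hs₂] at hdist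
  exact hdist

lemma le_apply_of_le_apply (hk : IsRadialKernel k) (hβ : 0 ≤ β) (hg₁ : Continuous g₁)
    (hg₂ : Continuous g₂) (hpos₁ : ∀ u, 0 ≤ g₁ u) (hpos₂ : ∀ u, 0 ≤ g₂ u) {B : ℝ} {K : NNReal}
    (hg : EqOn g₁ g₂ (Iic B)) (hlip : LipschitzOnWith K g₁ (Iic B))
    (hU₁ : IsRadialSolution k β g₁ U₀ U₁) (hU₂ : IsRadialSolution k β g₂ U₀ U₂) {r : ℝ}
    (hr : B ≤ U₂ r) : B ≤ U₁ r := by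
  by_contra! hlt
  have hmono := hU₁.monotone hk hβ hg₁ hpos₁
  have hstart : U₂ (min r 0) ≤ B := by
    rw [hU₂.apply_of_nonpos hk (min_le_right r 0), ← hU₁.apply_of_nonpos hk (min_le_right r 0)]
    exact (hmono (min_le_left r 0)).trans hlt.le
  obtain ⟨t, ht, hUt⟩ := intermediate_value_Icc (min_le_left r 0) hU₂.continuous.continuousOn
    ⟨hstart, hr⟩
  have hUt₁ : U₁ t < B := (hmono ht.2).trans_lt hlt
  exact hUt₁.ne ((hU₁.eq_of_le hk hβ hg₁ hg₂ hpos₁ hpos₂ hg hlip hU₂ hUt₁.le hUt.le).trans hUt)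

lemma abs_sub_le (hk : IsRadialKernel k) (hβ : 0 ≤ β) (hg₁ : Continuous g₁) (hg₂ : Continuous g₂)
    (hpos₁ : ∀ u, 0 ≤ g₁ u) (hpos₂ : ∀ u, 0 ≤ g₂ u) {B ε : ℝ} {K : NNReal}
    (hg : EqOn g₁ g₂ (Iic B)) (hlip : LipschitzOnWith K g₁ (Iic B))
    (hε₁ : ∀ u, B ≤ u → g₁ u ≤ ε) (hε₂ : ∀ u, B ≤ u → g₂ u ≤ ε)
    (hU₁ : IsRadialSolution k β g₁ U₀ U₁) (hU₂ : IsRadialSolution k β g₂ U₀ U₂) (r : ℝ) :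
    |g₁ (U₁ r) - g₂ (U₂ r)| ≤ ε := by
  have hlip₂ : LipschitzOnWith K g₂ (Iic B) := fun x hx y hy => by
    rw [← hg hx, ← hg hy]
    exact hlip hx hy
  by_cases hr : U₁ r ≤ B ∧ U₂ r ≤ B
  · have hε : 0 ≤ ε := (hpos₁ B).trans (hε₁ B le_rfl)
    rw [hU₁.eq_of_le hk hβ hg₁ hg₂ hpos₁ hpos₂ hg hlip hU₂ hr.1 hr.2, hg hr.2, sub_self, abs_zero]
    exact hε
  · have hboth : B ≤ U₁ r ∧ B ≤ U₂ r := by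
      rcases not_and_or.1 hr with h | h
      · exact ⟨(not_le.1 h).le,
          hU₂.le_apply_of_le_apply hk hβ hg₂ hg₁ hpos₂ hpos₁ hg.symm hlip₂ hU₁ (not_le.1 h).le⟩
      · exact ⟨hU₁.le_apply_of_le_apply hk hβ hg₁ hg₂ hpos₁ hpos₂ hg hlip hU₂ (not_le.1 h).le,
          (not_le.1 h).le⟩
    exact abs_sub_le_of_nonneg_of_le (hpos₁ _) (hε₁ _ hboth.1) (hpos₂ _) (hε₂ _ hboth.2)

end IsRadialSolution

lemma exists_isRadialSolution_of_lipschitzWith {k G : ℝ → ℝ} {β M : ℝ} {K : NNReal}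
    (hk : IsRadialKernel k) (hβ : 0 ≤ β) (hG : LipschitzWith K G) (hbound : ∀ u, |G u| ≤ M)
    (U₀ : ℝ) : ∃ U, IsRadialSolution k β G U₀ U := by
  set w := fun r => exp ((K + 1 : ℝ) * kernelMass k r)
  have hw : Continuous w := by
    have := continuous_kernelMass hk.continuous
    fun_prop
  have hw₁ (r : ℝ) : 1 ≤ w r :=
    one_le_exp (mul_nonneg (by positivity) (kernelMass_nonneg hk r))
  obtain ⟨h, hh, hfix⟩ := exists_continuous_fixedPoint_of_weighted_contraction
    (T := fun h r => G (U₀ + radialPotential k β h r)) (M := M) (q := K / (K + 1)) hw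
    (fun r => exp_pos _) (NNReal.div_lt_one_of_lt (lt_add_one K))
    (fun h hh => hG.continuous.comp
      (continuous_const.add (contDiff_radialPotential hk.continuous hβ hh).continuous))
    (fun h _ r => (hbound _).trans
      (le_mul_of_one_le_right ((abs_nonneg _).trans (hbound 0)) (hw₁ r)))
    fun h₁ h₂ hh₁ hh₂ d hd hdiff r => by
      calc |G (U₀ + radialPotential k β h₁ r) - G (U₀ + radialPotential k β h₂ r)|
          ≤ K * |radialPotential k β h₁ r - radialPotential k β h₂ r| := by
            simpa only [Real.dist_eq, add_sub_add_left_eq_sub] using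
              hG.dist_le_mul (U₀ + radialPotential k β h₁ r) (U₀ + radialPotential k β h₂ r)
        _ ≤ K * (d / (K + 1) * w r) := by
            gcongr
            exact abs_radialPotential_sub_le hk hβ hh₁ hh₂ (by positivity) hd fun s _ => hdiff s
        _ = (K / (K + 1) : NNReal) * d * w r := by
            push_cast
            ring
  exact ⟨_, .of_source hk.continuous hβ hh fun r => (congr_fun hfix r).symm⟩

/-- The properties of the moments of `φ` on which well-posedness rests: the source term decreases
to `0` at the cut-off energy `E₀`, and no Lipschitz bound is asked for up to `E₀` itself. -/
structure IsCutoffNonlinearity (g : ℝ → ℝ) (E₀ : ℝ) : Prop where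
  continuous : Continuous g
  antitone : Antitone g
  bddAbove : BddAbove (range g)
  eq_zero_of_le : ∀ u, E₀ ≤ u → g u = 0
  exists_lipschitzOnWith : ∀ B < E₀, ∃ K, LipschitzOnWith K g (Iic B)

namespace IsCutoffNonlinearity

variable {g k U₁ U₂ : ℝ → ℝ} {E₀ β U₀ : ℝ}

lemma nonneg (hg : IsCutoffNonlinearity g E₀) (u : ℝ) : 0 ≤ g u := by
  rw [← hg.eq_zero_of_le _ (le_max_right u E₀)]
  exact hg.antitone (le_max_left u E₀)

lemma continuous_comp_min (hg : IsCutoffNonlinearity g E₀) (B : ℝ) :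
    Continuous fun u => g (min u B) :=
  hg.continuous.comp (continuous_id.min continuous_const)

lemma exists_lipschitzWith_comp_min (hg : IsCutoffNonlinearity g E₀) {B : ℝ} (hB : B < E₀) :
    ∃ K, LipschitzWith K fun u => g (min u B) := by
  obtain ⟨K, hK⟩ := hg.exists_lipschitzOnWith B hB
  refine ⟨K * 1, lipschitzOnWith_univ.1 ?_⟩
  exact hK.comp (LipschitzWith.id.min_const B).lipschitzOnWith fun u _ => min_le_right u B

lemma abs_comp_min_sub_le (hg : IsCutoffNonlinearity g E₀) (B u : ℝ) :
    |g (min u B) - g u| ≤ g B := by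
  rcases le_total u B with hu | hu
  · rw [min_eq_left hu, sub_self, abs_zero]
    exact hg.nonneg B
  · rw [min_eq_right hu]
    exact abs_sub_le_of_nonneg_of_le (hg.nonneg B) le_rfl (hg.nonneg u) (hg.antitone hu)

lemma exists_seq_tendsto_zero (hg : IsCutoffNonlinearity g E₀) :
    ∃ B : ℕ → ℝ, Monotone B ∧ (∀ n, B n < E₀) ∧ Tendsto (fun n => g (B n)) atTop (𝓝 0) := by
  obtain ⟨B, hmono, hB, hlim⟩ := exists_seq_strictMono_tendsto E₀
  refine ⟨B, hmono.monotone, hB, ?_⟩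
  rw [← hg.eq_zero_of_le E₀ le_rfl]
  exact (hg.continuous.tendsto E₀).comp hlim

theorem isRadialSolution_unique (hg : IsCutoffNonlinearity g E₀) (hk : IsRadialKernel k)
    (hβ : 0 ≤ β) (hU₁ : IsRadialSolution k β g U₀ U₁) (hU₂ : IsRadialSolution k β g U₀ U₂) :
    U₁ = U₂ := by
  obtain ⟨B, -, hB, hlim⟩ := hg.exists_seq_tendsto_zero
  have hsource : g ∘ U₁ = g ∘ U₂ := by
    refine funext fun r => sub_eq_zero.1 (abs_nonpos_iff.1 (ge_of_tendsto' hlim fun n => ?_))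
    obtain ⟨K, hK⟩ := hg.exists_lipschitzOnWith _ (hB n)
    exact hU₁.abs_sub_le hk hβ hg.continuous hg.continuous hg.nonneg hg.nonneg (eqOn_refl _ _) hK
      (fun u hu => hg.antitone hu) (fun u hu => hg.antitone hu) hU₂ r
  funext r
  rw [hU₁.eq_add_radialPotential, hU₂.eq_add_radialPotential, hsource]

lemma abs_source_comp_min_sub_le (hg : IsCutoffNonlinearity g E₀) (hk : IsRadialKernel k)
    (hβ : 0 ≤ β) {B₁ B₂ : ℝ} (hB : B₁ ≤ B₂) (hB₁ : B₁ < E₀)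
    (hU₁ : IsRadialSolution k β (fun u => g (min u B₁)) U₀ U₁)
    (hU₂ : IsRadialSolution k β (fun u => g (min u B₂)) U₀ U₂) (r : ℝ) :
    |g (min (U₁ r) B₁) - g (min (U₂ r) B₂)| ≤ g B₁ := by
  obtain ⟨K, hK⟩ := hg.exists_lipschitzWith_comp_min hB₁
  refine hU₁.abs_sub_le hk hβ (hg.continuous_comp_min B₁) (hg.continuous_comp_min B₂)
    (fun u => hg.nonneg _) (fun u => hg.nonneg _) (fun u hu => ?_) hK.lipschitzOnWith
    (fun u hu => hg.antitone (le_min hu le_rfl)) (fun u hu => hg.antitone (le_min hu hB)) hU₂ r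
  simp only [min_eq_left (mem_Iic.1 hu), min_eq_left ((mem_Iic.1 hu).trans hB)]

theorem exists_isRadialSolution (hg : IsCutoffNonlinearity g E₀) (hk : IsRadialKernel k)
    (hβ : 0 ≤ β) (U₀ : ℝ) : ∃ U, IsRadialSolution k β g U₀ U := by
  obtain ⟨B, hmono, hB, hlim⟩ := hg.exists_seq_tendsto_zero
  obtain ⟨M, hM⟩ := hg.bddAbove
  have hsol (n : ℕ) : ∃ U, IsRadialSolution k β (fun u => g (min u (B n))) U₀ U := by
    obtain ⟨K, hK⟩ := hg.exists_lipschitzWith_comp_min (hB n)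
    exact exists_isRadialSolution_of_lipschitzWith hk hβ hK (M := M)
      (fun u => (abs_of_nonneg (hg.nonneg _)).trans_le (hM (mem_range_self _))) U₀
  choose U hU using hsol
  set h : ℕ → ℝ → ℝ := fun n => (fun u => g (min u (B n))) ∘ U n
  have hh (n : ℕ) : Continuous (h n) := (hg.continuous_comp_min _).comp (hU n).continuous
  obtain ⟨hinf, hunif⟩ := exists_tendstoUniformly_of_dist_le (f := h)
    (fun n m hnm => hg.abs_source_comp_min_sub_le hk hβ (hmono hnm) (hB n) (hU n) (hU m)) hlim
  have hinf_cont : Continuous hinf := hunif.continuous (Frequently.of_forall hh)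
  refine ⟨_, .of_source hk.continuous hβ hinf_cont fun r => ?_⟩
  have hpot : Tendsto (fun n => U n r) atTop (𝓝 (U₀ + radialPotential k β hinf r)) := by
    simp only [fun n => (hU n).eq_add_radialPotential r]
    exact (tendsto_radialPotential hk hβ hh hinf_cont hunif r).const_add U₀
  have hdiff : Tendsto (fun n => h n r - g (U n r)) atTop (𝓝 0) :=
    squeeze_zero_norm (fun n => hg.abs_comp_min_sub_le (B n) (U n r)) hlim
  exact tendsto_nhds_unique (hunif.tendsto_at r)
    (by simpa using hdiff.add ((hg.continuous.tendsto _).comp hpot))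

end IsCutoffNonlinearity

/-- The moment `g_p` of the energy profile `φ` with cut-off energy `E₀`; the density of the state
with potential `U` is a multiple of `r ^ (2 * l) * g_(l + 1/2) (U r)`. -/
noncomputable def energyMoment (φ : ℝ → ℝ) (E₀ p u : ℝ) : ℝ :=
  ∫ E in u..E₀, φ E * (E - u) ^ p

/-- The contribution of the energies in `[x, y]` to the moment of order `p`. The domain of
integration does not depend on `u`: energies below `u` drop out through the positive part. -/
noncomputable def truncMoment (φ : ℝ → ℝ) (x y p u : ℝ) : ℝ :=
  ∫ E in x..y, φ E * max (E - u) 0 ^ p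

section Moment

variable {φ : ℝ → ℝ} {E₀ p x y u v : ℝ}

lemma max_sub_rpow_le (hp : 0 ≤ p) (E : ℝ) (huv : u ≤ v) :
    max (E - v) 0 ^ p ≤ max (E - u) 0 ^ p :=
  rpow_le_rpow (le_max_right _ _) (max_le_max_right _ (sub_le_sub_left huv E)) hp

lemma intervalIntegrable_mul_max_sub_rpow (hp : 0 ≤ p) (hφ : IntervalIntegrable φ volume x y)
    (u : ℝ) : IntervalIntegrable (fun E => φ E * max (E - u) 0 ^ p) volume x y :=
  hφ.mul_continuousOn
    ((continuous_max_zero_rpow hp).comp (continuous_id.sub continuous_const)).continuousOn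

lemma continuous_truncMoment (hp : 0 ≤ p) (hφ : IntervalIntegrable φ volume x y) :
    Continuous (truncMoment φ x y p) := by
  refine continuous_iff_continuousAt.2 fun u₀ => ?_
  refine intervalIntegral.continuousAt_of_dominated_interval
    (bound := fun E => ‖φ E‖ * max (E - (u₀ - 1)) 0 ^ p) (Eventually.of_forall fun u => ?_) ?_
    (intervalIntegrable_mul_max_sub_rpow hp hφ.norm _) (Eventually.of_forall fun E _ => ?_)
  · exact (intervalIntegrable_mul_max_sub_rpow hp hφ u).def'.aestronglyMeasurable
  · filter_upwards [lt_mem_nhds (sub_one_lt u₀)] with u hu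
    refine Eventually.of_forall fun E _ => ?_
    rw [norm_mul, Real.norm_of_nonneg (rpow_nonneg (le_max_right _ _) p)]
    exact mul_le_mul_of_nonneg_left (max_sub_rpow_le hp E hu.le) (norm_nonneg _)
  · exact (continuous_const.mul
      ((continuous_max_zero_rpow hp).comp (continuous_const.sub continuous_id))).continuousAt

lemma antitone_truncMoment (hp : 0 ≤ p) (hxy : x ≤ y) (hnonneg : ∀ E, 0 ≤ φ E)
    (hφ : IntervalIntegrable φ volume x y) : Antitone (truncMoment φ x y p) :=
  fun u v huv => intervalIntegral.integral_mono_on hxy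
    (intervalIntegrable_mul_max_sub_rpow hp hφ v) (intervalIntegrable_mul_max_sub_rpow hp hφ u)
    fun E _ => mul_le_mul_of_nonneg_left (max_sub_rpow_le hp E huv) (hnonneg E)

lemma truncMoment_of_le (hp : 0 < p) (hxy : x ≤ y) (hu : y ≤ u) : truncMoment φ x y p u = 0 := by
  refine intervalIntegral.integral_zero_ae (Eventually.of_forall fun E hE => ?_)
  rw [uIoc_of_le hxy] at hE
  rw [max_eq_right (sub_nonpos.2 (hE.2.trans hu)), zero_rpow hp.ne', mul_zero]

lemma truncMoment_add_adjacent (hp : 0 ≤ p) {e : ℝ} (hφ₁ : IntervalIntegrable φ volume x e)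
    (hφ₂ : IntervalIntegrable φ volume e y) (u : ℝ) :
    truncMoment φ x e p u + truncMoment φ e y p u = truncMoment φ x y p u :=
  intervalIntegral.integral_add_adjacent_intervals
    (intervalIntegrable_mul_max_sub_rpow hp hφ₁ u) (intervalIntegrable_mul_max_sub_rpow hp hφ₂ u)

lemma energyMoment_of_le (hvanish : ∀ E, E₀ ≤ E → φ E = 0) (hu : E₀ ≤ u) :
    energyMoment φ E₀ p u = 0 := by
  refine intervalIntegral.integral_zero_ae (Eventually.of_forall fun E hE => ?_)
  rw [uIoc_of_ge hu] at hE
  rw [hvanish E hE.1.le, zero_mul]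

lemma energyMoment_nonneg (hnonneg : ∀ E, 0 ≤ φ E) (hvanish : ∀ E, E₀ ≤ E → φ E = 0) (u : ℝ) :
    0 ≤ energyMoment φ E₀ p u := by
  rcases le_total u E₀ with hu | hu
  · exact intervalIntegral.integral_nonneg hu fun E hE =>
      mul_nonneg (hnonneg E) (rpow_nonneg (sub_nonneg.2 hE.1) _)
  · exact (energyMoment_of_le hvanish hu).ge

lemma energyMoment_eq_truncMoment (hp : 0 < p) (hvanish : ∀ E, E₀ ≤ E → φ E = 0) (hx : x ≤ E₀)
    (hφ : IntervalIntegrable φ volume x E₀) (hu : x ≤ u) :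
    energyMoment φ E₀ p u = truncMoment φ x E₀ p u := by
  rcases le_total u E₀ with huE | huE
  · have hmem : u ∈ uIcc x E₀ := mem_uIcc_of_le hu huE
    rw [← truncMoment_add_adjacent hp.le (hφ.mono_set (uIcc_subset_uIcc_left hmem))
      (hφ.mono_set (uIcc_subset_uIcc_right hmem)), truncMoment_of_le hp hu le_rfl, zero_add]
    refine intervalIntegral.integral_congr fun E hE => ?_
    rw [uIcc_of_le huE] at hE
    simp only [max_eq_left (sub_nonneg.2 hE.1)]
  · rw [truncMoment_of_le hp hx huE, energyMoment_of_le hvanish huE]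

lemma integral_max_sub_rpow_sub_le (hp : 0 ≤ p) (hxy : x ≤ y) (hu : x ≤ u) (huv : u ≤ v) :
    (∫ E in x..y, max (E - u) 0 ^ p) - ∫ E in x..y, max (E - v) 0 ^ p
      ≤ (y - x) ^ p * (v - u) := by
  have hint (a b : ℝ) : IntervalIntegrable (fun t : ℝ => max t 0 ^ p) volume a b :=
    (continuous_max_zero_rpow hp).intervalIntegrable a b
  rw [intervalIntegral.integral_comp_sub_right (fun t => max t 0 ^ p),
    intervalIntegral.integral_comp_sub_right (fun t => max t 0 ^ p),
    intervalIntegral.integral_interval_sub_interval_comm' (hint _ _) (hint _ _) (hint _ _)]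
  calc (∫ t in (y - v)..(y - u), max t 0 ^ p) - ∫ t in (x - v)..(x - u), max t 0 ^ p
      ≤ ∫ t in (y - v)..(y - u), max t 0 ^ p :=
        sub_le_self _ <| intervalIntegral.integral_nonneg (sub_le_sub_left huv x) fun t _ =>
          rpow_nonneg (le_max_right _ _) p
    _ ≤ ∫ _ in (y - v)..(y - u), (y - x) ^ p := by
        refine intervalIntegral.integral_mono_on (sub_le_sub_left huv y) (hint _ _)
          intervalIntegrable_const fun t ht => ?_
        exact rpow_le_rpow (le_max_right _ _)
          (max_le (ht.2.trans (sub_le_sub_left hu y)) (sub_nonneg.2 hxy)) hp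
    _ = (y - x) ^ p * (v - u) := by
        rw [intervalIntegral.integral_const, smul_eq_mul]
        ring

/-- For `p < 1` the integrand is not Lipschitz in `u`, but its translates are so in `L¹`. -/
lemma lipschitzOnWith_truncMoment_of_le (hp : 0 ≤ p) (hxy : x ≤ y) (hnonneg : ∀ E, 0 ≤ φ E)
    (hφ : IntervalIntegrable φ volume x y) {M : ℝ} (hM : ∀ E ∈ Icc x y, φ E ≤ M) :
    LipschitzOnWith (M * (y - x) ^ p).toNNReal (truncMoment φ x y p) (Ici x) := by
  have hM₀ : 0 ≤ M := (hnonneg x).trans (hM x ⟨le_rfl, hxy⟩)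
  have hconst : 0 ≤ M * (y - x) ^ p := mul_nonneg hM₀ (rpow_nonneg (sub_nonneg.2 hxy) p)
  refine .of_le_add_mul _ fun u hu v _ => ?_
  rw [coe_toNNReal _ hconst]
  rcases le_total v u with hvu | huv
  · exact (antitone_truncMoment hp hxy hnonneg hφ hvu).trans
      (le_add_of_nonneg_right (mul_nonneg hconst dist_nonneg))
  have hint (w : ℝ) : IntervalIntegrable (fun E : ℝ => max (E - w) 0 ^ p) volume x y :=
    ((continuous_max_zero_rpow hp).comp (continuous_id.sub continuous_const)).intervalIntegrable _ _
  have hintφ := intervalIntegrable_mul_max_sub_rpow hp hφ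
  rw [← sub_le_iff_le_add', dist_comm, Real.dist_eq, abs_of_nonneg (sub_nonneg.2 huv)]
  calc truncMoment φ x y p u - truncMoment φ x y p v
      = ∫ E in x..y, φ E * (max (E - u) 0 ^ p - max (E - v) 0 ^ p) := by
        simp only [truncMoment, mul_sub, intervalIntegral.integral_sub (hintφ u) (hintφ v)]
    _ ≤ ∫ E in x..y, M * (max (E - u) 0 ^ p - max (E - v) 0 ^ p) := by
        refine intervalIntegral.integral_mono_on hxy ?_ (((hint u).sub (hint v)).const_mul M)
          fun E hE => mul_le_mul_of_nonneg_right (hM E hE) (sub_nonneg.2 (max_sub_rpow_le hp E huv))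
        simpa only [mul_sub] using (hintφ u).sub (hintφ v)
    _ = M * ((∫ E in x..y, max (E - u) 0 ^ p) - ∫ E in x..y, max (E - v) 0 ^ p) := by
        rw [intervalIntegral.integral_const_mul, intervalIntegral.integral_sub (hint u) (hint v)]
    _ ≤ M * ((y - x) ^ p * (v - u)) :=
        mul_le_mul_of_nonneg_left (integral_max_sub_rpow_sub_le hp hxy hu huv) hM₀
    _ = M * (y - x) ^ p * (v - u) := (mul_assoc _ _ _).symm

lemma exists_lipschitzOnWith_rpow_Icc (p : ℝ) {a : ℝ} (ha : 0 < a) (b : ℝ) :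
    ∃ K, LipschitzOnWith K (fun t : ℝ => t ^ p) (Icc a b) :=
  (contDiffOn_id.rpow_const_of_ne fun _ ht => (ha.trans_le ht.1).ne').exists_lipschitzOnWith
    one_ne_zero (convex_Icc a b) isCompact_Icc

lemma exists_lipschitzOnWith_truncMoment_of_lt (hp : 0 ≤ p) (hxy : x ≤ y)
    (hφ : IntervalIntegrable φ volume x y) {B : ℝ} (hB : B < x) (c : ℝ) :
    ∃ K, LipschitzOnWith K (truncMoment φ x y p) (Icc c B) := by
  obtain ⟨K, hK⟩ := exists_lipschitzOnWith_rpow_Icc p (sub_pos.2 hB) (y - c)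
  have hmem {w E : ℝ} (hw : w ∈ Icc c B) (hE : E ∈ Ioc x y) : E - w ∈ Icc (x - B) (y - c) :=
    ⟨sub_le_sub hE.1.le hw.2, sub_le_sub hE.2 hw.1⟩
  have hpos {w E : ℝ} (hw : w ∈ Icc c B) (hE : E ∈ Ioc x y) : max (E - w) 0 = E - w :=
    max_eq_left ((sub_pos.2 hB).le.trans (hmem hw hE).1)
  have hintφ := intervalIntegrable_mul_max_sub_rpow hp hφ
  refine ⟨(∫ E in x..y, ‖φ E‖).toNNReal * K, .of_dist_le_mul fun u hu v hv => ?_⟩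
  have hmass : 0 ≤ ∫ E in x..y, ‖φ E‖ :=
    intervalIntegral.integral_nonneg hxy fun _ _ => norm_nonneg _
  rw [NNReal.coe_mul, coe_toNNReal _ hmass, mul_assoc, ← intervalIntegral.integral_mul_const,
    dist_eq_norm, truncMoment, truncMoment, ← intervalIntegral.integral_sub (hintφ u) (hintφ v)]
  refine intervalIntegral.norm_integral_le_of_norm_le hxy (Eventually.of_forall fun E hE => ?_)
    (hφ.norm.mul_const _)
  rw [← mul_sub, norm_mul, hpos hu hE, hpos hv hE, ← dist_eq_norm]
  refine mul_le_mul_of_nonneg_left ?_ (norm_nonneg _)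
  exact (hK.dist_le_mul _ (hmem hu hE) _ (hmem hv hE)).trans_eq (by rw [dist_sub_left])

/-- Split at some `e` in `(B, y)`: below `e` the profile `φ` is bounded, and above `e`, where it may
blow up, the weight is smooth in `u ≤ B`. -/
lemma exists_lipschitzOnWith_truncMoment (hp : 0 ≤ p) (hnonneg : ∀ E, 0 ≤ φ E)
    (hφ : IntervalIntegrable φ volume x y) (hbdd : ∀ e < y, BddAbove (φ '' Icc x e)) {B : ℝ}
    (hxB : x ≤ B) (hBy : B < y) : ∃ K, LipschitzOnWith K (truncMoment φ x y p) (Icc x B) := by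
  obtain ⟨e, hBe, hey⟩ := exists_between hBy
  obtain ⟨M, hM⟩ := hbdd e hey
  have hxe : x ≤ e := hxB.trans hBe.le
  have hmem : e ∈ uIcc x y := mem_uIcc_of_le hxe hey.le
  have hφ₁ : IntervalIntegrable φ volume x e := hφ.mono_set (uIcc_subset_uIcc_left hmem)
  have hφ₂ : IntervalIntegrable φ volume e y := hφ.mono_set (uIcc_subset_uIcc_right hmem)
  have hlow := lipschitzOnWith_truncMoment_of_le hp hxe hnonneg hφ₁
    fun E hE => hM (mem_image_of_mem φ hE)
  obtain ⟨K, hhigh⟩ := exists_lipschitzOnWith_truncMoment_of_lt hp hey.le hφ₂ hBe x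
  rw [← funext (truncMoment_add_adjacent hp hφ₁ hφ₂)]
  exact ⟨_, (hlow.mono Icc_subset_Ici_self).add hhigh⟩

theorem isCutoffNonlinearity_energyMoment (hp : 0 < p) (hnonneg : ∀ E, 0 ≤ φ E)
    (hvanish : ∀ E, E₀ ≤ E → φ E = 0) {c : ℝ} (hc : c < E₀)
    (hφ : IntervalIntegrable φ volume c E₀) (hbdd : ∀ e < E₀, BddAbove (φ '' Icc c e)) :
    IsCutoffNonlinearity (fun u => energyMoment φ E₀ p (max u c)) E₀ := by
  have hanti := antitone_truncMoment hp.le hc.le hnonneg hφ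
  simp only [fun u => energyMoment_eq_truncMoment hp hvanish hc.le hφ (le_max_right u c)]
  exact {
    continuous := (continuous_truncMoment hp.le hφ).comp (continuous_id.max continuous_const)
    antitone := fun u v huv => hanti (max_le_max_right c huv)
    bddAbove := ⟨truncMoment φ c E₀ p c, forall_mem_range.2 fun u => hanti (le_max_right u c)⟩
    eq_zero_of_le := fun u hu => truncMoment_of_le hp hc.le (hu.trans (le_max_left u c))
    exists_lipschitzOnWith := fun B hB => by
      obtain ⟨K, hK⟩ := exists_lipschitzOnWith_truncMoment hp.le hnonneg hφ hbdd
        (le_max_right B c) (max_lt hB hc)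
      exact ⟨K * 1, hK.comp (LipschitzWith.id.max_const c).lipschitzOnWith fun u hu =>
        ⟨le_max_right u c, max_le_max_right c hu⟩⟩ }

end Moment

/-- The constant `2 ^ (l + 7/2) * π ^ 2 * c_(l, -1/2)` in the reduced Vlasov-Poisson problem. -/
noncomputable def couplingConstant (l : ℝ) : ℝ :=
  2 ^ (l + 7 / 2) * π ^ 2 * ∫ s in (0:ℝ)..1, s ^ l * (1 - s) ^ (-(1 / 2) : ℝ)

/-- The kernel for which `radialField` is the right-hand side of the reduced Vlasov-Poisson
problem. -/
noncomputable def reducedVPKernel (l t : ℝ) : ℝ :=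
  couplingConstant l * max t 0 ^ (2 * l + 1)

section ReducedVP

variable {E₀ l U₀ : ℝ} {φ g U V : ℝ → ℝ}

lemma couplingConstant_nonneg (l : ℝ) : 0 ≤ couplingConstant l :=
  mul_nonneg (by positivity) <| intervalIntegral.integral_nonneg zero_le_one fun s hs =>
    mul_nonneg (rpow_nonneg hs.1 _) (rpow_nonneg (sub_nonneg.2 hs.2) _)

lemma isRadialKernel_reducedVPKernel (hl : -(1 / 2) < l) : IsRadialKernel (reducedVPKernel l) :=
  isRadialKernel_const_mul_rpow (couplingConstant_nonneg l) (by linarith)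

lemma isReducedVPSolution_iff :
    IsReducedVPSolution E₀ l φ U₀ U ↔ U 0 = U₀ ∧ ContDiffOn ℝ 1 U (Ici 0) ∧
      ∀ r, 0 < r → HasDerivAt U (radialField (reducedVPKernel l) (2 * l + 2)
        (fun s => energyMoment φ E₀ (l + 1 / 2) (U s)) r) r := by
  refine and_congr_right fun _ => and_congr_right fun _ => forall₂_congr fun r hr => ?_
  have hexp : 2 * l + 2 = 2 * l + 1 + 1 := by ring
  rw [hexp, show reducedVPKernel l = fun t => couplingConstant l * max t 0 ^ (2 * l + 1) from rfl,
    radialField_const_mul_rpow _ _ _ hr]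
  rfl

lemma IsReducedVPSolution.monotoneOn (hl : -(1 / 2) < l) (hnonneg : ∀ E, 0 ≤ φ E)
    (hvanish : ∀ E, E₀ ≤ E → φ E = 0) (hV : IsReducedVPSolution E₀ l φ U₀ V) :
    MonotoneOn V (Ici 0) := by
  obtain ⟨-, hsmooth, hderiv⟩ := isReducedVPSolution_iff.1 hV
  refine monotoneOn_of_hasDerivWithinAt_nonneg (convex_Ici 0) hsmooth.continuousOn
    (fun r hr => (hderiv r (interior_Ici.subset hr)).hasDerivWithinAt) fun r _ => ?_
  exact radialField_nonneg (isRadialKernel_reducedVPKernel hl).nonneg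
    (fun s => energyMoment_nonneg hnonneg hvanish _) r

lemma IsReducedVPSolution.isRadialSolution (hl : -(1 / 2) < l) (hnonneg : ∀ E, 0 ≤ φ E)
    (hvanish : ∀ E, E₀ ≤ E → φ E = 0) (hg : Continuous g)
    (hgφ : EqOn g (energyMoment φ E₀ (l + 1 / 2)) (Ici U₀))
    (hV : IsReducedVPSolution E₀ l φ U₀ V) :
    IsRadialSolution (reducedVPKernel l) (2 * l + 2) g U₀ fun r => V (max r 0) := by
  have hmono := hV.monotoneOn hl hnonneg hvanish
  obtain ⟨hV₀, hsmooth, hderiv⟩ := isReducedVPSolution_iff.1 hV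
  have hk := isRadialKernel_reducedVPKernel hl
  have hcont : Continuous fun r => V (max r 0) :=
    hsmooth.continuousOn.comp_continuous (continuous_id.max continuous_const)
      fun r => le_max_right r 0
  refine ⟨hcont, fun r => ?_⟩
  rcases le_total r 0 with hr | hr
  · rw [radialPotential_of_nonpos hk _ hr, max_eq_right hr, hV₀, add_zero]
  have hsource : EqOn (g ∘ fun s => V (max s 0))
      (fun s => energyMoment φ E₀ (l + 1 / 2) (V s)) (Ici 0) := fun s hs => by
    simp only [Function.comp_apply, max_eq_left (mem_Ici.1 hs)]
    exact hgφ (hV₀ ▸ hmono self_mem_Ici hs hs)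
  have hftc : radialPotential (reducedVPKernel l) (2 * l + 2) (g ∘ fun s => V (max s 0)) r
      = V r - V 0 :=
    intervalIntegral.integral_eq_sub_of_hasDerivAt_of_le hr
      (hsmooth.continuousOn.mono Icc_subset_Ici_self)
      (fun t ht => (hderiv t ht.1).congr_deriv (radialField_congr ht.1.le hsource).symm)
      ((continuous_radialField hk.continuous (by linarith) (hg.comp hcont)).intervalIntegrable _ _)
  rw [hftc, hV₀, max_eq_left hr, add_sub_cancel]

lemma IsRadialSolution.isReducedVPSolution (hl : -(1 / 2) < l) (hg : Continuous g)
    (hpos : ∀ u, 0 ≤ g u) (hgφ : EqOn g (energyMoment φ E₀ (l + 1 / 2)) (Ici U₀))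
    (hU : IsRadialSolution (reducedVPKernel l) (2 * l + 2) g U₀ U) :
    IsReducedVPSolution E₀ l φ U₀ U := by
  have hk := isRadialKernel_reducedVPKernel hl
  have hβ : 0 ≤ 2 * l + 2 := by linarith
  have hU₀ : U 0 = U₀ := hU.apply_of_nonpos hk le_rfl
  have hsource : EqOn (g ∘ U) (fun s => energyMoment φ E₀ (l + 1 / 2) (U s)) (Ici 0) :=
    fun s hs => hgφ (hU₀ ▸ hU.monotone hk hβ hg hpos hs)
  have hgU : Continuous (g ∘ U) := hg.comp hU.continuous
  have hpot : U = fun r => U₀ + radialPotential (reducedVPKernel l) (2 * l + 2) (g ∘ U) r :=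
    funext hU.eq_add_radialPotential
  refine isReducedVPSolution_iff.2 ⟨hU₀, ?_, fun r hr => ?_⟩
  · rw [hpot]
    exact (contDiff_const.add (contDiff_radialPotential hk.continuous hβ hgU)).contDiffOn
  · have hderiv := (hasDerivAt_radialPotential hk.continuous hβ hgU r).const_add U₀
    rw [← hpot, radialField_congr hr.le hsource] at hderiv
    exact hderiv

end ReducedVP

section PowerBound

variable {φ : ℝ → ℝ} {E₀ k C c : ℝ}

lemma intervalIntegrable_of_le_rpow (hk : -1 < k) (hmeas : Measurable φ) (hnonneg : ∀ E, 0 ≤ φ E)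
    (hc : c ≤ E₀) (hC : ∀ E ∈ Icc c E₀, φ E ≤ C * max (E₀ - E) 0 ^ k) :
    IntervalIntegrable φ volume c E₀ := by
  have hmajorant : IntervalIntegrable (fun E : ℝ => C * (E₀ - E) ^ k) volume c E₀ := by
    simpa using ((intervalIntegral.intervalIntegrable_rpow' (a := E₀ - c) (b := E₀ - E₀)
      hk).comp_sub_left E₀).const_mul C
  refine hmajorant.mono_fun' hmeas.aestronglyMeasurable ?_
  refine (ae_restrict_mem measurableSet_uIoc).mono fun E hE => ?_
  rw [uIoc_of_le hc] at hE
  simpa only [Real.norm_of_nonneg (hnonneg E), max_eq_left (sub_nonneg.2 hE.2)] using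
    hC E (Ioc_subset_Icc_self hE)

lemma bddAbove_image_of_le_rpow {e : ℝ} (he : e < E₀)
    (hC : ∀ E ∈ Icc c e, φ E ≤ C * max (E₀ - E) 0 ^ k) : BddAbove (φ '' Icc c e) := by
  have hcont : ContinuousOn (fun E => C * max (E₀ - E) 0 ^ k) (Icc c e) :=
    continuousOn_const.mul <| ContinuousOn.rpow_const (by fun_prop) fun E hE =>
      Or.inl (lt_max_of_lt_left (sub_pos.2 (hE.2.trans_lt he))).ne'
  obtain ⟨M, hM⟩ := isCompact_Icc.bddAbove_image hcont
  exact ⟨M, forall_mem_image.2 fun E hE => (hC E hE).trans (hM (mem_image_of_mem _ hE))⟩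

end PowerBound

theorem reduced_VP_global_existence_uniqueness_general
    (E₀ l : ℝ) (hl : -(1 / 2) < l) (φ : ℝ → ℝ) (hnonneg : ∀ E, 0 ≤ φ E)
    (hvanish : ∀ E, E₀ ≤ E → φ E = 0) (hint : ∀ c < E₀, IntervalIntegrable φ volume c E₀)
    (hbdd : ∀ c, ∀ e < E₀, BddAbove (φ '' Icc c e)) (U₀ : ℝ) :
    ∃ U : ℝ → ℝ, IsReducedVPSolution E₀ l φ U₀ U ∧
      ∀ V : ℝ → ℝ, IsReducedVPSolution E₀ l φ U₀ V → EqOn U V (Ici 0) := by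
  obtain ⟨c, hcU₀, hcE₀⟩ : ∃ c, c ≤ U₀ ∧ c < E₀ :=
    ⟨min U₀ (E₀ - 1), min_le_left _ _, (min_le_right _ _).trans_lt (sub_one_lt E₀)⟩
  set g := fun u => energyMoment φ E₀ (l + 1 / 2) (max u c)
  have hg : IsCutoffNonlinearity g E₀ :=
    isCutoffNonlinearity_energyMoment (by linarith) hnonneg hvanish hcE₀ (hint c hcE₀) (hbdd c)
  have hgφ : EqOn g (energyMoment φ E₀ (l + 1 / 2)) (Ici U₀) := fun u hu =>
    congrArg (energyMoment φ E₀ (l + 1 / 2)) (max_eq_left (hcU₀.trans hu))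
  have hk := isRadialKernel_reducedVPKernel hl
  have hβ : 0 ≤ 2 * l + 2 := by linarith
  obtain ⟨U, hU⟩ := hg.exists_isRadialSolution hk hβ U₀
  refine ⟨U, hU.isReducedVPSolution hl hg.continuous hg.nonneg hgφ, fun V hV r hr => ?_⟩
  have hUV := hg.isRadialSolution_unique hk hβ hU
    (hV.isRadialSolution hl hnonneg hvanish hg.continuous hgφ)
  simpa only [max_eq_left (mem_Ici.1 hr)] using congr_fun hUV r

theorem reduced_VP_global_existence_uniqueness
    (E₀ k l : ℝ) (hk : -1 < k) (hl : -(1/2 : ℝ) < l) (hkl : 0 < k + l + 3 / 2)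
    (φ : ℝ → ℝ) (hmeas : Measurable φ) (hnonneg : ∀ E, 0 ≤ φ E)
    (hvanish : ∀ E, E₀ ≤ E → φ E = 0)
    (hbound : ∀ K : Set ℝ, IsCompact K →
      ∃ C : ℝ, 0 ≤ C ∧ ∀ E ∈ K, φ E ≤ C * (max (E₀ - E) 0) ^ k)
    (U₀ : ℝ) :
    ∃ U : ℝ → ℝ, IsReducedVPSolution E₀ l φ U₀ U ∧
      ∀ V : ℝ → ℝ, IsReducedVPSolution E₀ l φ U₀ V → EqOn U V (Ici 0) := by
  have hpower (a b : ℝ) : ∃ C, ∀ E ∈ Icc a b, φ E ≤ C * max (E₀ - E) 0 ^ k :=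
    (hbound (Icc a b) isCompact_Icc).imp fun _ h => h.2
  exact reduced_VP_global_existence_uniqueness_general E₀ l hl φ hnonneg hvanish
    (fun c hc => (hpower c E₀).elim fun _ => intervalIntegrable_of_le_rpow hk hmeas hnonneg hc.le)
    (fun c e he => (hpower c e).elim fun _ => bddAbove_image_of_le_rpow he) U₀
end
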